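/- arXiv:0706.1091 — 7 statements merged into one kernel-verified Lean document; each statement's English description precedes it below -/
import Mathlib

section
/- For all measurable functions g, h : (0,1) → {−1,1}, one has ∫₀¹∫₀¹ f(x,y) g(x) h(y) dx dy ≤ 1/2; moreover the value 1/2 is attained by some such pair (g,h). In other words, 1/2 is the greatest element of the set { ∫₀¹∫₀¹ f(x,y) g(x) h(y) dx dy : g, h : (0,1) → {−1,1} measurable }. -/
open MeasureTheory

/-- The integral of `h` against `±c`, with sign change at `x`,
in terms of the primitive of `h`. -/
lemma integral_sign_mul_eq {h : ℝ → ℝ} (hint : IntervalIntegrable h volume 0 1) (c : ℝ) {x : ℝ}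
    (hx : x ∈ Set.Ioo (0:ℝ) 1) :
    ∫ y in Set.Ioo (0:ℝ) 1, (if x < y then (1:ℝ) else -1) * c * h y =
      c * ((∫ y in (0:ℝ)..1, h y) - 2 * ∫ y in (0:ℝ)..x, h y) := by
  have hleft : IntervalIntegrable h volume 0 x := hint.mono_set (by
    rw [Set.uIcc_of_le hx.1.le, Set.uIcc_of_le zero_le_one]
    exact Set.Icc_subset_Icc_right hx.2.le)
  have hright : IntervalIntegrable h volume x 1 := hint.mono_set (by
    rw [Set.uIcc_of_le hx.2.le, Set.uIcc_of_le zero_le_one]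
    exact Set.Icc_subset_Icc_left hx.1.le)
  have eqleft : Set.EqOn (fun y => -c * h y)
      (fun y => (if x < y then (1:ℝ) else -1) * c * h y) (Set.uIoc 0 x) := by
    intro y hy
    rw [Set.uIoc_of_le hx.1.le] at hy
    simp [not_lt.2 hy.2]
  have eqright : Set.EqOn (fun y => c * h y)
      (fun y => (if x < y then (1:ℝ) else -1) * c * h y) (Set.uIoc x 1) := by
    intro y hy
    rw [Set.uIoc_of_le hx.2.le] at hy
    simp [hy.1]
  rw [← integral_Ioc_eq_integral_Ioo, ← intervalIntegral.integral_of_le zero_le_one,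
    ← intervalIntegral.integral_add_adjacent_intervals
      ((hleft.const_mul (-c)).congr eqleft) ((hright.const_mul c).congr eqright),
    ← intervalIntegral.integral_congr_ae (.of_forall eqleft),
    ← intervalIntegral.integral_congr_ae (.of_forall eqright),
    intervalIntegral.integral_const_mul, intervalIntegral.integral_const_mul,
    ← intervalIntegral.integral_add_adjacent_intervals hleft hright]
  ring

lemma intervalIntegral_const_add_mul (a b p q : ℝ) :
    ∫ x in p..q, (a + b * x) = a * (q - p) + b * ((q ^ 2 - p ^ 2) / 2) := by
  rw [intervalIntegral.integral_add intervalIntegrable_const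
      (Continuous.intervalIntegrable (by fun_prop) _ _),
    intervalIntegral.integral_const_mul, integral_id, intervalIntegral.integral_const, smul_eq_mul]
  ring

/-- Twice the distance to `z` on the circle `ℝ / ℤ` has mean `1 / 2`. -/
lemma integral_two_mul_circle_dist {z : ℝ} (hz : z ∈ Set.Icc (0:ℝ) 1) :
    ∫ x in (0:ℝ)..1, min (2 * |x - z|) (2 - 2 * |x - z|) = 1 / 2 := by
  have hint : ∀ p q : ℝ, IntervalIntegrable
      (fun x => min (2 * |x - z|) (2 - 2 * |x - z|)) volume p q :=
    fun p q => Continuous.intervalIntegrable (by fun_prop) _ _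
  have affine_piece : ∀ p q a b : ℝ, p ≤ q →
      (∀ x ∈ Set.Icc p q, min (2 * |x - z|) (2 - 2 * |x - z|) = a + b * x) →
      ∫ x in p..q, min (2 * |x - z|) (2 - 2 * |x - z|) =
        a * (q - p) + b * ((q ^ 2 - p ^ 2) / 2) := by
    intro p q a b hpq heq
    rw [← intervalIntegral_const_add_mul]
    refine intervalIntegral.integral_congr fun x hx => heq x ?_
    rwa [Set.uIcc_of_le hpq] at hx
  obtain ⟨hz0, hz1⟩ := hz
  rcases le_total z (1 / 2) with hzh | hzh
  · rw [← intervalIntegral.integral_add_adjacent_intervals (hint 0 z) (hint z 1),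
      ← intervalIntegral.integral_add_adjacent_intervals (hint z (z + 1 / 2)) (hint (z + 1 / 2) 1),
      affine_piece 0 z (2 * z) (-2) hz0, affine_piece z (z + 1 / 2) (-2 * z) 2 (by linarith),
      affine_piece (z + 1 / 2) 1 (2 + 2 * z) (-2) (by linarith)]
    · ring
    · rintro x ⟨hx, hx'⟩
      rw [abs_of_nonneg (by linarith), min_eq_right (by linarith)]
      ring
    · rintro x ⟨hx, hx'⟩
      rw [abs_of_nonneg (by linarith), min_eq_left (by linarith)]
      ring
    · rintro x ⟨hx, hx'⟩
      rw [abs_of_nonpos (by linarith), min_eq_left (by linarith)]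
      ring
  · rw [← intervalIntegral.integral_add_adjacent_intervals (hint 0 z) (hint z 1),
      ← intervalIntegral.integral_add_adjacent_intervals (hint 0 (z - 1 / 2)) (hint (z - 1 / 2) z),
      affine_piece 0 (z - 1 / 2) (2 - 2 * z) 2 (by linarith),
      affine_piece (z - 1 / 2) z (2 * z) (-2) (by linarith),
      affine_piece z 1 (-2 * z) 2 hz1]
    · ring
    · rintro x ⟨hx, hx'⟩
      rw [abs_of_nonneg (by linarith), min_eq_left (by linarith)]
      ring
    · rintro x ⟨hx, hx'⟩
      rw [abs_of_nonpos (by linarith), min_eq_left (by linarith)]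
      ring
    · rintro x ⟨hx, hx'⟩
      rw [abs_of_nonpos (by linarith), min_eq_right (by linarith)]
      ring

/-- A `2`-Lipschitz function on `[0, 1]` with opposite endpoint values is dominated by twice the
distance on the circle `ℝ / ℤ` to one of its zeros. -/
lemma exists_abs_le_circle_dist {F : ℝ → ℝ}
    (hF : ∀ a ∈ Set.Icc (0:ℝ) 1, ∀ b ∈ Set.Icc (0:ℝ) 1, |F a - F b| ≤ 2 * |a - b|)
    (hanti : F 1 = -F 0) :
    ∃ z ∈ Set.Icc (0:ℝ) 1, ∀ x ∈ Set.Icc (0:ℝ) 1,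
      |F x| ≤ min (2 * |x - z|) (2 - 2 * |x - z|) := by
  have hcont : ContinuousOn F (Set.Icc 0 1) :=
    (LipschitzOnWith.of_dist_le_mul (K := 2) fun a ha b hb => by
      simpa [Real.dist_eq] using hF a ha b hb).continuousOn
  have hzero : (0:ℝ) ∈ Set.uIcc (F 0) (F 1) := by
    rw [hanti, Set.mem_uIcc]
    rcases le_total (F 0) 0 with h | h
    · exact Or.inl ⟨h, by linarith⟩
    · exact Or.inr ⟨by linarith, h⟩
  rw [← Set.uIcc_of_le (zero_le_one' ℝ)] at hcont
  obtain ⟨z, hz, hFz⟩ := intermediate_value_uIcc hcont hzero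
  rw [Set.uIcc_of_le zero_le_one] at hz
  refine ⟨z, hz, fun x hx => le_min ?_ ?_⟩
  · simpa [hFz] using hF x hx z hz
  · have x0 := hF x hx 0 (by simp)
    have x1 := hF x hx 1 (by simp)
    have z0 := hF z hz 0 (by simp)
    have z1 := hF z hz 1 (by simp)
    rw [hFz] at z0 z1
    rw [hanti] at x1 z1
    obtain ⟨hz0, hz1⟩ := hz
    obtain ⟨hx0, hx1⟩ := hx
    rw [sub_zero, abs_of_nonneg hx0] at x0
    rw [sub_zero, abs_of_nonneg hz0] at z0
    rw [abs_of_nonpos (by linarith : x - 1 ≤ 0)] at x1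
    rw [abs_of_nonpos (by linarith : z - 1 ≤ 0)] at z1
    rw [abs_le] at x0 x1 z0 z1 ⊢
    rcases le_total x z with h | h
    · rw [abs_of_nonpos (by linarith)]
      constructor <;> linarith
    · rw [abs_of_nonneg (by linarith)]
      constructor <;> linarith

/-- Let `f : (0,1)×(0,1) → ℝ` be `1` if `x < y` and `-1` otherwise. Then `1/2` is the
greatest element of the set of values `∫∫ f(x,y) g(x) h(y)` over measurable
`g, h : (0,1) → {-1,1}`. -/
theorem bell_example1_dim1 :
    IsGreatest
      {I : ℝ | ∃ g h : ℝ → ℝ, Measurable g ∧ Measurable h ∧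
        (∀ x ∈ Set.Ioo (0:ℝ) 1, g x = 1 ∨ g x = -1) ∧
        (∀ y ∈ Set.Ioo (0:ℝ) 1, h y = 1 ∨ h y = -1) ∧
        I = ∫ x in Set.Ioo (0:ℝ) 1, ∫ y in Set.Ioo (0:ℝ) 1,
              (if x < y then (1:ℝ) else -1) * g x * h y}
      (1/2) := by
  constructor
  · refine ⟨fun x => if x < 1 / 2 then 1 else -1, fun _ => 1,
      Measurable.ite measurableSet_Iio measurable_const measurable_const, measurable_const,
      fun x _ => by dsimp only; split_ifs <;> simp, fun _ _ => Or.inl rfl, ?_⟩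
    refine (integral_two_mul_circle_dist (z := 1 / 2) (by norm_num)).symm.trans ?_
    rw [intervalIntegral.integral_of_le zero_le_one, integral_Ioc_eq_integral_Ioo]
    refine setIntegral_congr_fun measurableSet_Ioo fun x hx => ?_
    obtain ⟨hx0, hx1⟩ := id hx
    dsimp only
    rw [integral_sign_mul_eq (by simp) _ hx, intervalIntegral.integral_const,
      intervalIntegral.integral_const]
    split_ifs with hxh
    · rw [abs_of_nonpos (by linarith), min_eq_left (by linarith)]
      simp only [smul_eq_mul]
      ring
    · rw [abs_of_nonneg (by linarith), min_eq_left (by linarith)]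
      simp only [smul_eq_mul]
      ring
  · rintro I ⟨g, h, -, hh, hg1, hh1, rfl⟩
    have hbound : ∀ᵐ y : ℝ, y ∈ Set.Ioc (0:ℝ) 1 → ‖h y‖ ≤ 1 := by
      filter_upwards [Measure.ae_ne volume (1:ℝ)] with y hy1 hy
      rcases hh1 y ⟨hy.1, lt_of_le_of_ne hy.2 hy1⟩ with e | e <;> simp [e]
    have hint : IntervalIntegrable h volume 0 1 := by
      rw [intervalIntegrable_iff_integrableOn_Ioc_of_le zero_le_one]
      exact Measure.integrableOn_of_bounded (by simp) hh.aestronglyMeasurable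
        ((ae_restrict_iff' measurableSet_Ioc).2 hbound)
    have hprim : ∀ a ∈ Set.Icc (0:ℝ) 1, IntervalIntegrable h volume 0 a := fun a ha =>
      hint.mono_set (by
        rw [Set.uIcc_of_le ha.1, Set.uIcc_of_le zero_le_one]
        exact Set.Icc_subset_Icc_right ha.2)
    obtain ⟨z, hz, hle⟩ := exists_abs_le_circle_dist
      (F := fun x => (∫ y in (0:ℝ)..1, h y) - 2 * ∫ y in (0:ℝ)..x, h y)
      (fun a ha b hb => by
        have hlip : ‖∫ y in a..b, h y‖ ≤ 1 * |b - a| := by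
          refine intervalIntegral.norm_integral_le_of_norm_le_const_ae ?_
          filter_upwards [hbound] with y hy hyab
          exact hy ⟨(le_min ha.1 hb.1).trans_lt hyab.1, hyab.2.trans (max_le ha.2 hb.2)⟩
        rw [← intervalIntegral.integral_interval_sub_left (hprim b hb) (hprim a ha), one_mul,
          Real.norm_eq_abs, abs_sub_comm b a] at hlip
        rw [sub_sub_sub_cancel_left, ← mul_sub, abs_mul, abs_two]
        linarith)
      (by simp; ring)
    rw [← integral_two_mul_circle_dist hz, intervalIntegral.integral_of_le zero_le_one,
      integral_Ioc_eq_integral_Ioo]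
    refine (Real.le_norm_self _).trans (norm_integral_le_of_norm_le ?_ ?_)
    · exact (Continuous.integrableOn_Icc (by fun_prop)).mono_set Set.Ioo_subset_Icc_self
    · filter_upwards [ae_restrict_mem measurableSet_Ioo] with x hx
      have hgx : |g x| = 1 := by rcases hg1 x hx with e | e <;> simp [e]
      rw [integral_sign_mul_eq hint _ hx, Real.norm_eq_abs, abs_mul, hgx, one_mul]
      exact hle x (Set.Ioo_subset_Icc_self hx)
end

section
/- For all measurable functions g, h : 𝕋 → {−1,1}, one has ∬_{𝕋×𝕋} f(x,y) g(x) h(y) dx dy ≤ 1/2; moreover the value 1/2 is attained by some such pair (g,h). In other words, 1/2 is the greatest element of the set { ∬ f(x,y) g(x) h(y) dx dy : g, h : 𝕋 → {−1,1} measurable }. -/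
open MeasureTheory

/-- The function on the circle equal to `1` on the open arc of radius `1/4` around `0`
and to `-1` elsewhere. -/
noncomputable def arcSign (t : UnitAddCircle) : ℝ := if ‖t‖ < 1 / 4 then 1 else -1

lemma arcSign_eq_one_or (t : UnitAddCircle) : arcSign t = 1 ∨ arcSign t = -1 := by
  unfold arcSign
  split_ifs <;> simp

lemma arcSign_neg (t : UnitAddCircle) : arcSign (-t) = arcSign t := by
  simp [arcSign]

lemma measurable_arcSign : Measurable arcSign :=
  Measurable.ite (measurableSet_lt measurable_norm measurable_const)
    measurable_const measurable_const

lemma norm_coe_unitAddCircle_of_abs_le {t : ℝ} (ht : |t| ≤ 1 / 2) :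
    ‖(t : UnitAddCircle)‖ = |t| :=
  (AddCircle.norm_coe_eq_abs_iff 1 one_ne_zero).2 (by simpa using ht)

lemma norm_coe_unitAddCircle_sub_one (t : ℝ) :
    ‖((t - 1 : ℝ) : UnitAddCircle)‖ = ‖(t : UnitAddCircle)‖ := by
  rw [AddCircle.coe_sub, AddCircle.coe_period, sub_zero]

lemma norm_coe_unitAddCircle_of_mem_Icc {t : ℝ} (ht : t ∈ Set.Icc (1 / 2 : ℝ) 1) :
    ‖(t : UnitAddCircle)‖ = 1 - t := by
  obtain ⟨h1, h2⟩ := ht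
  rw [← norm_coe_unitAddCircle_sub_one, norm_coe_unitAddCircle_of_abs_le, abs_of_nonpos] <;>
    first | (rw [abs_le]; constructor <;> linarith) | linarith

lemma arcSign_coe_of_abs_lt {t : ℝ} (ht : |t| < 1 / 4) : arcSign t = 1 := by
  rw [arcSign, norm_coe_unitAddCircle_of_abs_le (by linarith), if_pos ht]

lemma arcSign_coe_of_mem_Icc {t : ℝ} (ht : t ∈ Set.Icc (1 / 4 : ℝ) (3 / 4)) :
    arcSign t = -1 := by
  obtain ⟨h1, h2⟩ := ht
  rw [arcSign, if_neg]
  rcases le_total t (1 / 2) with h | h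
  · rw [norm_coe_unitAddCircle_of_abs_le (by rw [abs_le]; constructor <;> linarith),
      abs_of_nonneg (by linarith)]
    linarith
  · rw [norm_coe_unitAddCircle_of_mem_Icc ⟨h, by linarith⟩]
    linarith

lemma integrable_of_measurable_of_abs_le {u : UnitAddCircle → ℝ} (hu : Measurable u) {C : ℝ}
    (hC : ∀ x, |u x| ≤ C) : Integrable u :=
  Integrable.of_bound hu.aestronglyMeasurable C (.of_forall hC)

lemma integral_arcSign_coe_sub_mul {a : ℝ} (h0 : 0 ≤ a) (h1 : a ≤ 1 / 2) :
    ∫ s : UnitAddCircle, arcSign (a - s) * arcSign s = 1 - 4 * a := by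
  have piece : ∀ (c p q : ℝ), p ≤ q →
      (∀ t ∈ Set.Ioo p q, arcSign ((a - t : ℝ) : UnitAddCircle) * arcSign t = c) →
      IntervalIntegrable (fun t : ℝ ↦ arcSign ((a - t : ℝ) : UnitAddCircle) * arcSign t)
        volume p q ∧
      ∫ t in p..q, arcSign ((a - t : ℝ) : UnitAddCircle) * arcSign t = (q - p) * c := by
    intro c p q hpq h
    refine ⟨(intervalIntegrable_congr_uIoo (g := fun _ ↦ c) ?_).2 intervalIntegrable_const, ?_⟩
    · rwa [Set.uIoo_of_le hpq]
    · rw [intervalIntegral.integral_congr_Ioo_of_le (g := fun _ ↦ c) hpq h]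
      simp
  have flip : ∀ t : ℝ, arcSign ((a - t : ℝ) : UnitAddCircle) = arcSign ((t - a : ℝ)) := by
    intro t
    rw [← arcSign_neg, ← AddCircle.coe_neg, neg_sub]
  obtain ⟨i1, e1⟩ := piece (-1) (-(1 / 4)) (a - 1 / 4) (by linarith) (by
    rintro t ⟨ht, ht'⟩
    rw [arcSign_coe_of_mem_Icc ⟨by linarith, by linarith⟩,
      arcSign_coe_of_abs_lt (by rw [abs_lt]; constructor <;> linarith)]
    norm_num)
  obtain ⟨i2, e2⟩ := piece 1 (a - 1 / 4) (1 / 4) (by linarith) (by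
    rintro t ⟨ht, ht'⟩
    rw [arcSign_coe_of_abs_lt (by rw [abs_lt]; constructor <;> linarith),
      arcSign_coe_of_abs_lt (by rw [abs_lt]; constructor <;> linarith)]
    norm_num)
  obtain ⟨i3, e3⟩ := piece (-1) (1 / 4) (a + 1 / 4) (by linarith) (by
    rintro t ⟨ht, ht'⟩
    rw [arcSign_coe_of_abs_lt (by rw [abs_lt]; constructor <;> linarith),
      arcSign_coe_of_mem_Icc ⟨by linarith, by linarith⟩]
    norm_num)
  obtain ⟨i4, e4⟩ := piece 1 (a + 1 / 4) (3 / 4) (by linarith) (by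
    rintro t ⟨ht, ht'⟩
    rw [flip, arcSign_coe_of_mem_Icc ⟨by linarith, by linarith⟩,
      arcSign_coe_of_mem_Icc ⟨by linarith, by linarith⟩]
    norm_num)
  rw [← UnitAddCircle.intervalIntegral_preimage (-(1 / 4)),
    show (-(1 / 4) + 1 : ℝ) = 3 / 4 by norm_num]
  simp only [← AddCircle.coe_sub]
  rw [← intervalIntegral.integral_add_adjacent_intervals ((i1.trans i2).trans i3) i4,
    ← intervalIntegral.integral_add_adjacent_intervals (i1.trans i2) i3,
    ← intervalIntegral.integral_add_adjacent_intervals i1 i2, e1, e2, e3, e4]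
  ring

lemma integral_arcSign_sub_mul_arcSign_sub (x y : UnitAddCircle) :
    ∫ s, arcSign (x - s) * arcSign (y - s) = 1 - 4 * dist x y := by
  have translate : ∀ x y : UnitAddCircle,
      ∫ s, arcSign (x - s) * arcSign (y - s) = ∫ s, arcSign (x - y - s) * arcSign s := by
    intro x y
    rw [← integral_add_left_eq_self _ y]
    simp [← sub_sub, arcSign_neg]
  obtain ⟨b, hb, hxy⟩ : ∃ b : ℝ, |b| ≤ 1 / 2 ∧ (b : UnitAddCircle) = x - y := by
    obtain ⟨c, hc⟩ := QuotientAddGroup.mk_surjective (x - y)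
    refine ⟨c - round c, abs_sub_round c, ?_⟩
    rw [AddCircle.coe_sub, ← hc, sub_eq_self, AddCircle.coe_eq_zero_iff]
    exact ⟨round c, by simp⟩
  rw [dist_eq_norm, ← hxy, norm_coe_unitAddCircle_of_abs_le hb]
  rcases abs_cases b with ⟨h, h'⟩ | ⟨h, h'⟩
  · rw [translate, ← hxy, h, integral_arcSign_coe_sub_mul h' (h ▸ hb)]
  · simp_rw [mul_comm (arcSign (x - _))]
    rw [translate, ← neg_sub x y, ← hxy, h, ← AddCircle.coe_neg,
      integral_arcSign_coe_sub_mul (by linarith) (h ▸ hb)]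

lemma integral_abs_one_sub_four_mul_norm :
    ∫ x : UnitAddCircle, |1 - 4 * ‖x‖| = 1 / 2 := by
  have hc : Continuous fun t : ℝ ↦ |1 - 4 * ‖(t : UnitAddCircle)‖| := by
    have : Continuous ((↑) : ℝ → UnitAddCircle) := AddCircle.continuous_mk' 1
    fun_prop
  have hi := fun p q : ℝ ↦ hc.intervalIntegrable (μ := volume) p q
  have piece : ∀ (m k p q : ℝ), p ≤ q →
      (∀ t ∈ Set.Ioo p q, |1 - 4 * ‖(t : UnitAddCircle)‖| = m * t + k) →
      ∫ t in p..q, |1 - 4 * ‖(t : UnitAddCircle)‖| = m * ((q ^ 2 - p ^ 2) / 2) + (q - p) * k := by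
    intro m k p q hpq h
    rw [intervalIntegral.integral_congr_Ioo_of_le (g := fun t ↦ m * t + k) hpq h,
      intervalIntegral.integral_add (Continuous.intervalIntegrable (by fun_prop) _ _)
        intervalIntegrable_const, intervalIntegral.integral_const_mul, integral_id]
    simp
  have left : ∀ t : ℝ, 0 ≤ t → t ≤ 1 / 2 → ‖(t : UnitAddCircle)‖ = t := by
    intro t h h'
    rw [norm_coe_unitAddCircle_of_abs_le (by rwa [abs_of_nonneg h]), abs_of_nonneg h]
  have right : ∀ t : ℝ, 1 / 2 ≤ t → t ≤ 1 → ‖(t : UnitAddCircle)‖ = 1 - t :=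
    fun t h h' ↦ norm_coe_unitAddCircle_of_mem_Icc ⟨h, h'⟩
  rw [← UnitAddCircle.intervalIntegral_preimage 0, zero_add,
    ← intervalIntegral.integral_add_adjacent_intervals (hi 0 (3 / 4)) (hi (3 / 4) 1),
    ← intervalIntegral.integral_add_adjacent_intervals (hi 0 (1 / 2)) (hi (1 / 2) (3 / 4)),
    ← intervalIntegral.integral_add_adjacent_intervals (hi 0 (1 / 4)) (hi (1 / 4) (1 / 2)),
    piece (-4) 1 0 (1 / 4) (by norm_num), piece 4 (-1) (1 / 4) (1 / 2) (by norm_num),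
    piece (-4) 3 (1 / 2) (3 / 4) (by norm_num), piece 4 (-3) (3 / 4) 1 (by norm_num)]
  · norm_num
  · rintro t ⟨ht, ht'⟩
    rw [right t (by linarith) (by linarith), abs_of_nonneg (by linarith)]
    ring
  · rintro t ⟨ht, ht'⟩
    rw [right t (by linarith) (by linarith), abs_of_nonpos (by linarith)]
    ring
  · rintro t ⟨ht, ht'⟩
    rw [left t (by linarith) (by linarith), abs_of_nonpos (by linarith)]
    ring
  · rintro t ⟨ht, ht'⟩
    rw [left t (by linarith) (by linarith), abs_of_nonneg (by linarith)]
    ring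

/-- The convolution of `arcSign` with `h`. -/
noncomputable def arcConv (h : UnitAddCircle → ℝ) (x : UnitAddCircle) : ℝ :=
  ∫ y, arcSign (x - y) * h y

section

variable {h : UnitAddCircle → ℝ}

lemma integrable_arcSign_sub_mul (hm : Measurable h) (hs : ∀ y, h y = 1 ∨ h y = -1)
    (x : UnitAddCircle) : Integrable fun y ↦ arcSign (x - y) * h y := by
  refine integrable_of_measurable_of_abs_le (C := 1)
    ((measurable_arcSign.comp (measurable_const.sub measurable_id)).mul hm) fun y ↦ ?_
  rcases hs y with h1 | h1 <;> rcases arcSign_eq_one_or (x - y) with h2 | h2 <;> simp [h1, h2]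

lemma integrable_arcSign_sub_mul_arcSign_sub (x y : UnitAddCircle) :
    Integrable fun s ↦ arcSign (x - s) * arcSign (y - s) :=
  integrable_arcSign_sub_mul (measurable_arcSign.comp (measurable_const.sub measurable_id))
    (fun _ ↦ arcSign_eq_one_or _) x

lemma abs_arcConv_sub_le (hm : Measurable h) (hs : ∀ y, h y = 1 ∨ h y = -1)
    (x z : UnitAddCircle) : |arcConv h x - arcConv h z| ≤ 4 * dist x z := by
  have key := integral_arcSign_sub_mul_arcSign_sub x z
  rw [arcConv, arcConv, ← integral_sub (integrable_arcSign_sub_mul hm hs x)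
    (integrable_arcSign_sub_mul hm hs z)]
  refine (norm_integral_le_of_norm_le (G := ℝ) (g := fun s ↦ 1 - arcSign (x - s) * arcSign (z - s))
    ((integrable_const 1).sub (integrable_arcSign_sub_mul_arcSign_sub x z))
    (.of_forall fun s ↦ ?_)).trans_eq ?_
  · rcases hs s with h1 | h1 <;> rcases arcSign_eq_one_or (x - s) with h2 | h2 <;>
      rcases arcSign_eq_one_or (z - s) with h3 | h3 <;> rw [h1, h2, h3] <;> norm_num
  · rw [integral_sub (integrable_const 1) (integrable_arcSign_sub_mul_arcSign_sub x z), key]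
    simp [measureReal_def]

lemma abs_arcConv_add_le (hm : Measurable h) (hs : ∀ y, h y = 1 ∨ h y = -1)
    (x z : UnitAddCircle) : |arcConv h x + arcConv h z| ≤ 2 - 4 * dist x z := by
  have key := integral_arcSign_sub_mul_arcSign_sub x z
  rw [arcConv, arcConv, ← integral_add (integrable_arcSign_sub_mul hm hs x)
    (integrable_arcSign_sub_mul hm hs z)]
  refine (norm_integral_le_of_norm_le (G := ℝ) (g := fun s ↦ 1 + arcSign (x - s) * arcSign (z - s))
    ((integrable_const 1).add (integrable_arcSign_sub_mul_arcSign_sub x z))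
    (.of_forall fun s ↦ ?_)).trans_eq ?_
  · rcases hs s with h1 | h1 <;> rcases arcSign_eq_one_or (x - s) with h2 | h2 <;>
      rcases arcSign_eq_one_or (z - s) with h3 | h3 <;> rw [h1, h2, h3] <;> norm_num
  · rw [integral_add (integrable_const 1) (integrable_arcSign_sub_mul_arcSign_sub x z), key]
    simp [measureReal_def]
    ring

lemma continuous_arcConv (hm : Measurable h) (hs : ∀ y, h y = 1 ∨ h y = -1) :
    Continuous (arcConv h) :=
  (LipschitzWith.of_dist_le_mul (K := 4) (abs_arcConv_sub_le hm hs)).continuous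

lemma exists_arcConv_eq_zero (hm : Measurable h) (hs : ∀ y, h y = 1 ∨ h y = -1) :
    ∃ z, arcConv h z = 0 := by
  have anti : arcConv h 0 + arcConv h ((1 / 2 : ℝ) : UnitAddCircle) = 0 := by
    have := abs_arcConv_add_le hm hs 0 ((1 / 2 : ℝ) : UnitAddCircle)
    rw [dist_zero_left, AddCircle.norm_half_period_eq] at this
    norm_num at this
    simpa using this
  refine mem_range_of_exists_le_of_exists_ge (continuous_arcConv hm hs) ?_ ?_
  · rcases le_total (arcConv h 0) 0 with h0 | h0
    exacts [⟨_, h0⟩, ⟨((1 / 2 : ℝ) : UnitAddCircle), by linarith⟩]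
  · rcases le_total (arcConv h 0) 0 with h0 | h0
    exacts [⟨((1 / 2 : ℝ) : UnitAddCircle), by linarith⟩, ⟨_, h0⟩]

lemma integral_mul_arcConv_le {g : UnitAddCircle → ℝ} (hg : ∀ x, g x = 1 ∨ g x = -1)
    (hgm : Measurable g) (hm : Measurable h) (hs : ∀ y, h y = 1 ∨ h y = -1) :
    ∫ x, g x * arcConv h x ≤ 1 / 2 := by
  obtain ⟨z, hz⟩ := exists_arcConv_eq_zero hm hs
  have bound : ∀ x, |g x * arcConv h x| ≤ 1 - |1 - 4 * ‖x - z‖| := by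
    intro x
    have h1 := abs_arcConv_sub_le hm hs x z
    have h2 := abs_arcConv_add_le hm hs x z
    rw [hz, sub_zero, dist_eq_norm] at h1
    rw [hz, add_zero, dist_eq_norm] at h2
    have : |g x * arcConv h x| = |arcConv h x| := by rcases hg x with e | e <;> simp [e]
    rw [this]
    rcases abs_cases (1 - 4 * ‖x - z‖) with ⟨e, -⟩ | ⟨e, -⟩ <;> rw [e] <;> linarith
  have hi : Integrable fun x : UnitAddCircle ↦ |1 - 4 * ‖x - z‖| :=
    (show Continuous fun x : UnitAddCircle ↦ |1 - 4 * ‖x - z‖| by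
      fun_prop).integrable_of_hasCompactSupport (.of_compactSpace _)
  calc ∫ x, g x * arcConv h x ≤ ∫ x, (1 - |1 - 4 * ‖x - z‖|) :=
        integral_mono
          (integrable_of_measurable_of_abs_le (hgm.mul (continuous_arcConv hm hs).measurable)
            fun x ↦ (bound x).trans (sub_le_self _ (abs_nonneg _)))
          ((integrable_const 1).sub hi) fun x ↦ (le_abs_self _).trans (bound x)
    _ = 1 / 2 := by
        rw [integral_sub (integrable_const 1) hi,
          integral_sub_right_eq_self (fun x : UnitAddCircle ↦ |1 - 4 * ‖x‖|) z,
          integral_abs_one_sub_four_mul_norm]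
        norm_num [measureReal_def]

end

lemma integral_arcSign_mul_arcConv_arcSign :
    ∫ x, arcSign x * arcConv arcSign x = 1 / 2 := by
  rw [← integral_abs_one_sub_four_mul_norm]
  congr 1 with x
  have h := integral_arcSign_sub_mul_arcSign_sub x 0
  simp only [zero_sub, arcSign_neg, dist_zero_right] at h
  rw [arcConv, h, arcSign]
  split_ifs with hx
  · rw [abs_of_pos (by linarith), one_mul]
  · rw [abs_of_nonpos (by linarith), neg_one_mul]

/-- Let `𝕋 = ℝ/ℤ` be the circle of length 1 with its Haar probability measure, and let
`f(x,y) = 1` if `dist x y < 1/4` and `-1` otherwise. Then `1/2` is the greatest element of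
the set of values `∬ f(x,y) g(x) h(y)` over measurable `g, h : 𝕋 → {-1,1}`. -/
theorem bell_example2_dim1 :
    IsGreatest
      {I : ℝ | ∃ g h : UnitAddCircle → ℝ, Measurable g ∧ Measurable h ∧
        (∀ x, g x = 1 ∨ g x = -1) ∧
        (∀ y, h y = 1 ∨ h y = -1) ∧
        I = ∫ x : UnitAddCircle, ∫ y : UnitAddCircle,
              (if dist x y < 1/4 then (1:ℝ) else -1) * g x * h y}
      (1/2) := by
  have integral_eq : ∀ g h : UnitAddCircle → ℝ,
      (∫ x : UnitAddCircle, ∫ y : UnitAddCircle,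
        (if dist x y < 1/4 then (1:ℝ) else -1) * g x * h y) = ∫ x, g x * arcConv h x := by
    intro g h
    congr 1 with x
    rw [arcConv, ← integral_const_mul]
    congr 1 with y
    rw [arcSign, dist_eq_norm]
    ring
  constructor
  · exact ⟨arcSign, arcSign, measurable_arcSign, measurable_arcSign, arcSign_eq_one_or,
      arcSign_eq_one_or, by rw [integral_eq, integral_arcSign_mul_arcConv_arcSign]⟩
  · rintro _ ⟨g, h, hg, hh, hgs, hhs, rfl⟩
    rw [integral_eq]
    exact integral_mul_arcConv_le hgs hg hh hhs
end

section
/- Let d ≥ 2 be a natural number. Then 2/π is the greatest element of the set { ∫₀¹∫₀¹ f(x,y) ⟨g(x), h(y)⟩ dx dy : g, h : (0,1) → ℝ^d measurable with ‖g(x)‖ = 1 and ‖h(y)‖ = 1 for almost every x, y }, where ⟨·,·⟩ and ‖·‖ are the Euclidean inner product and norm on ℝ^d. -/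
open MeasureTheory
open scoped RealInnerProductSpace

/-- The kernel equal to `1` if `x < y` and to `-1` otherwise. -/
noncomputable def orderSign (x y : ℝ) : ℝ := if x < y then 1 else -1

lemma measurable_uncurry_orderSign : Measurable (Function.uncurry orderSign) :=
  Measurable.ite (measurableSet_lt measurable_fst measurable_snd) measurable_const measurable_const

lemma norm_orderSign (x y : ℝ) : ‖orderSign x y‖ = 1 := by
  unfold orderSign; split_ifs <;> simp

section Kernel

variable {E : Type*} [NormedAddCommGroup E] [NormedSpace ℝ E]

lemma setIntegral_orderSign_smul_left {φ : ℝ → E} (hφ : Continuous φ) {y : ℝ}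
    (hy : y ∈ Set.Ioo (0 : ℝ) 1) :
    ∫ x in Set.Ioo (0 : ℝ) 1, orderSign x y • φ x =
      (∫ x in (0 : ℝ)..y, φ x) - ∫ x in y..1, φ x := by
  rw [← integral_Ioc_eq_integral_Ioo, ← Set.Ioc_union_Ioc_eq_Ioc hy.1.le hy.2.le]
  have h0 : ∀ᵐ x, x ∈ Set.Ioc 0 y → orderSign x y • φ x = φ x := by
    filter_upwards [Measure.ae_ne volume y] with x hx hxy
    simp [orderSign, lt_of_le_of_ne hxy.2 hx]
  have h1 : ∀ x ∈ Set.Ioc y 1, orderSign x y • φ x = -φ x := fun x hx => by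
    simp [orderSign, hx.1.not_gt]
  have hint (a b : ℝ) : IntegrableOn φ (Set.Ioc a b) :=
    (hφ.integrableOn_Icc).mono_set Set.Ioc_subset_Icc_self
  rw [setIntegral_union (Set.Ioc_disjoint_Ioc_of_le le_rfl) measurableSet_Ioc,
    setIntegral_congr_ae measurableSet_Ioc h0, setIntegral_congr_fun measurableSet_Ioc h1,
    integral_neg, intervalIntegral.integral_of_le hy.1.le, intervalIntegral.integral_of_le hy.2.le,
    sub_eq_add_neg]
  · exact (hint 0 y).congr_fun_ae
      (((ae_restrict_iff' measurableSet_Ioc).2 h0).mono fun _ hx => hx.symm)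
  · exact (hint y 1).neg.congr_fun (fun x hx => (h1 x hx).symm) measurableSet_Ioc

lemma orderSign_swap {x y : ℝ} (h : x ≠ y) : orderSign x y = -orderSign y x := by
  rcases h.lt_or_gt with h | h <;> simp [orderSign, h, h.not_gt]

lemma setIntegral_orderSign_smul_right {φ : ℝ → E} (hφ : Continuous φ) {x : ℝ}
    (hx : x ∈ Set.Ioo (0 : ℝ) 1) :
    ∫ y in Set.Ioo (0 : ℝ) 1, orderSign x y • φ y =
      (∫ y in x..1, φ y) - ∫ y in (0 : ℝ)..x, φ y := by
  rw [← neg_sub, ← setIntegral_orderSign_smul_left hφ hx, ← integral_neg]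
  refine integral_congr_ae (ae_restrict_of_ae ?_)
  filter_upwards [Measure.ae_ne volume x] with y hy
  rw [orderSign_swap hy.symm, neg_smul]

lemma integrable_orderSign_smul {μ : Measure ℝ} [IsFiniteMeasure μ] {h : ℝ → E}
    (hh : Integrable h μ) :
    Integrable (fun p : ℝ × ℝ => orderSign p.1 p.2 • h p.2) (μ.prod μ) :=
  (hh.comp_snd μ).bdd_smul 1 measurable_uncurry_orderSign.aestronglyMeasurable
    (.of_forall fun p => (norm_orderSign p.1 p.2).le)

lemma norm_integral_orderSign_smul_le {μ : Measure ℝ} (h : ℝ → E) (x : ℝ) :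
    ‖∫ y, orderSign x y • h y ∂μ‖ ≤ ∫ y, ‖h y‖ ∂μ := by
  refine (norm_integral_le_integral_norm _).trans_eq ?_
  simp only [norm_smul, norm_orderSign, one_mul]

lemma memLp_integral_orderSign_smul {μ : Measure ℝ} [IsFiniteMeasure μ] {h : ℝ → E}
    (hh : Integrable h μ) (p : ENNReal) :
    MemLp (fun x => ∫ y, orderSign x y • h y ∂μ) p μ :=
  MemLp.of_bound (integrable_orderSign_smul hh).integral_prod_left.aestronglyMeasurable _
    (.of_forall (norm_integral_orderSign_smul_le h))

end Kernel

/-- The exponentials of odd frequency are eigenfunctions of the kernel `orderSign`. -/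
lemma setIntegral_orderSign_smul_exp {c : ℂ} (hc : Complex.exp c = -1) {y : ℝ}
    (hy : y ∈ Set.Ioo (0 : ℝ) 1) :
    ∫ x in Set.Ioo (0 : ℝ) 1, orderSign x y • Complex.exp (c * x) =
      2 / c * Complex.exp (c * y) := by
  have hc0 : c ≠ 0 := by
    rintro rfl
    norm_num [Complex.ext_iff] at hc
  rw [setIntegral_orderSign_smul_left (by fun_prop) hy, integral_exp_mul_complex hc0,
    integral_exp_mul_complex hc0]
  simp only [Complex.ofReal_zero, Complex.ofReal_one, mul_zero, mul_one, Complex.exp_zero, hc]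
  field_simp
  ring

lemma integral_exp_mul_integral_orderSign_smul {c : ℂ} (hre : c.re = 0)
    (hc : Complex.exp c = -1) {h : ℝ → ℂ} (hh : IntegrableOn h (Set.Ioo (0 : ℝ) 1)) :
    ∫ x in Set.Ioo (0 : ℝ) 1, Complex.exp (c * x) *
        ∫ y in Set.Ioo (0 : ℝ) 1, orderSign x y • h y =
      2 / c * ∫ y in Set.Ioo (0 : ℝ) 1, Complex.exp (c * y) * h y := by
  have hint : Integrable
      (Function.uncurry fun x y : ℝ => Complex.exp (c * x) * (orderSign x y • h y))
      ((volume.restrict (Set.Ioo (0 : ℝ) 1)).prod (volume.restrict (Set.Ioo (0 : ℝ) 1))) := by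
    refine (integrable_orderSign_smul hh).bdd_mul (c := 1)
      (Continuous.aestronglyMeasurable (by fun_prop)) (.of_forall fun p => ?_)
    simp [Complex.norm_exp, hre]
  simp_rw [← integral_const_mul]
  rw [integral_integral_swap hint]
  refine setIntegral_congr_fun measurableSet_Ioo fun y hy => ?_
  simp only [mul_smul_comm, ← smul_mul_assoc, integral_mul_const,
    setIntegral_orderSign_smul_exp hc hy, mul_assoc]

lemma fourierCoeffOn_exp_mul (u : ℝ → ℂ) (n : ℤ) :
    fourierCoeffOn zero_lt_one (fun x => Complex.exp (-(Real.pi * Complex.I) * x) * u x) n =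
      ∫ x in Set.Ioo (0 : ℝ) 1,
        Complex.exp (-((2 * n + 1) * Real.pi * Complex.I) * x) * u x := by
  rw [fourierCoeffOn_eq_integral, intervalIntegral.integral_of_le zero_le_one,
    integral_Ioc_eq_integral_Ioo]
  simp only [sub_zero, div_one, one_smul, fourier_coe_apply, smul_eq_mul, ← mul_assoc,
    ← Complex.exp_add]
  congr! 4
  push_cast
  ring

lemma exp_neg_odd_mul_pi_mul_I (n : ℤ) :
    Complex.exp (-((2 * n + 1) * Real.pi * Complex.I)) = -1 := by
  rw [Complex.exp_neg, show (2 * n + 1) * Real.pi * Complex.I =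
    n * (2 * Real.pi * Complex.I) + Real.pi * Complex.I by ring, Complex.exp_add,
    Complex.exp_int_mul_two_pi_mul_I, Complex.exp_pi_mul_I]
  norm_num

lemma hasSum_sq_norm_integral_exp_mul {u : ℝ → ℂ}
    (hu : MemLp u 2 (volume.restrict (Set.Ioo (0 : ℝ) 1))) :
    HasSum (fun n : ℤ => ‖∫ x in Set.Ioo (0 : ℝ) 1,
        Complex.exp (-((2 * n + 1) * Real.pi * Complex.I) * x) * u x‖ ^ 2)
      (∫ x in Set.Ioo (0 : ℝ) 1, ‖u x‖ ^ 2) := by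
  have hnorm (x : ℝ) : ‖Complex.exp (-(Real.pi * Complex.I) * x)‖ = 1 := by
    simp [Complex.norm_exp]
  have hL2 : MemLp (fun x : ℝ => Complex.exp (-(Real.pi * Complex.I) * x) * u x) 2
      (volume.restrict (Set.Ioc (0 : ℝ) 1)) := by
    rw [← Measure.restrict_congr_set Ioo_ae_eq_Ioc]
    refine hu.of_le ((Continuous.aestronglyMeasurable (by fun_prop)).mul hu.1)
      (.of_forall fun x => ?_)
    rw [norm_mul, hnorm, one_mul]
  simpa only [fourierCoeffOn_exp_mul, norm_mul, hnorm, one_mul, sub_zero, inv_one, one_smul,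
    intervalIntegral.integral_of_le zero_le_one, integral_Ioc_eq_integral_Ioo] using
    hasSum_sq_fourierCoeffOn zero_lt_one hL2

/-- The integral operator with kernel `orderSign` has norm at most `2 / π` on `L²(0,1)`. -/
lemma integral_norm_sq_integral_orderSign_smul_le {h : ℝ → ℂ}
    (hh : MemLp h 2 (volume.restrict (Set.Ioo (0 : ℝ) 1))) :
    ∫ x in Set.Ioo (0 : ℝ) 1, ‖∫ y in Set.Ioo (0 : ℝ) 1, orderSign x y • h y‖ ^ 2 ≤
      (2 / Real.pi) ^ 2 * ∫ y in Set.Ioo (0 : ℝ) 1, ‖h y‖ ^ 2 := by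
  have hint := hh.integrable (by norm_num)
  refine hasSum_le (fun n => ?_)
    (hasSum_sq_norm_integral_exp_mul (memLp_integral_orderSign_smul hint 2))
    ((hasSum_sq_norm_integral_exp_mul hh).mul_left _)
  rw [integral_exp_mul_integral_orderSign_smul (by simp) (exp_neg_odd_mul_pi_mul_I n) hint,
    norm_mul, mul_pow]
  gcongr
  have hn : (1 : ℝ) ≤ ‖(2 * n + 1 : ℂ)‖ := by
    have : (1 : ℤ) ≤ |2 * n + 1| := Int.one_le_abs (by omega)
    rw [show (2 * n + 1 : ℂ) = ((2 * n + 1 : ℤ) : ℂ) by push_cast; rfl, Complex.norm_intCast]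
    exact_mod_cast this
  rw [norm_div, norm_neg, norm_mul, norm_mul, Complex.norm_I, mul_one, Complex.norm_real,
    Real.norm_of_nonneg Real.pi_pos.le, Complex.norm_ofNat]
  gcongr
  exact le_mul_of_one_le_left Real.pi_pos.le hn

lemma integral_mul_integral_orderSign_mul_le {g h : ℝ → ℝ}
    (hg : MemLp g 2 (volume.restrict (Set.Ioo (0 : ℝ) 1)))
    (hh : MemLp h 2 (volume.restrict (Set.Ioo (0 : ℝ) 1))) :
    ∫ x in Set.Ioo (0 : ℝ) 1, g x * ∫ y in Set.Ioo (0 : ℝ) 1, orderSign x y * h y ≤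
      1 / Real.pi *
        ((∫ x in Set.Ioo (0 : ℝ) 1, g x ^ 2) + ∫ y in Set.Ioo (0 : ℝ) 1, h y ^ 2) := by
  have hpi := Real.pi_pos
  have hu := memLp_integral_orderSign_smul (hh.integrable (by norm_num)) 2
  simp only [smul_eq_mul] at hu
  have key := integral_norm_sq_integral_orderSign_smul_le hh.ofReal
  simp only [Complex.real_smul, RCLike.ofReal_eq_complex_ofReal, ← Complex.ofReal_mul,
    integral_complex_ofReal, Complex.norm_real, Real.norm_eq_abs, sq_abs] at key
  calc _ ≤ ∫ x in Set.Ioo (0 : ℝ) 1, (1 / Real.pi * g x ^ 2 +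
        Real.pi / 4 * (∫ y in Set.Ioo (0 : ℝ) 1, orderSign x y * h y) ^ 2) := by
        refine integral_mono (hg.integrable_mul hu)
          ((hg.integrable_sq.const_mul _).add (hu.integrable_sq.const_mul _)) fun x => ?_
        set b := ∫ y in Set.Ioo (0 : ℝ) 1, orderSign x y * h y
        have : 1 / Real.pi * g x ^ 2 + Real.pi / 4 * b ^ 2 - g x * b =
            (g x - Real.pi / 2 * b) ^ 2 / Real.pi := by
          field_simp
          ring
        have : 0 ≤ (g x - Real.pi / 2 * b) ^ 2 / Real.pi := by positivity
        dsimp only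
        linarith
    _ = 1 / Real.pi * (∫ x in Set.Ioo (0 : ℝ) 1, g x ^ 2) + Real.pi / 4 *
        ∫ x in Set.Ioo (0 : ℝ) 1, (∫ y in Set.Ioo (0 : ℝ) 1, orderSign x y * h y) ^ 2 := by
        rw [integral_add (hg.integrable_sq.const_mul _) (hu.integrable_sq.const_mul _),
          integral_const_mul, integral_const_mul]
    _ ≤ _ := by
        grw [key]
        apply le_of_eq
        field_simp
        ring

lemma integral_orderSign_mul_inner_le {d : ℕ} {g h : ℝ → EuclideanSpace ℝ (Fin d)}
    (hg : Measurable g) (hh : Measurable h)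
    (hg1 : ∀ᵐ x ∂(volume.restrict (Set.Ioo (0 : ℝ) 1)), ‖g x‖ = 1)
    (hh1 : ∀ᵐ y ∂(volume.restrict (Set.Ioo (0 : ℝ) 1)), ‖h y‖ = 1) :
    ∫ x in Set.Ioo (0 : ℝ) 1, ∫ y in Set.Ioo (0 : ℝ) 1, orderSign x y * ⟪g x, h y⟫ ≤
      2 / Real.pi := by
  have hcoord {k : ℝ → EuclideanSpace ℝ (Fin d)} (hk : Measurable k)
      (hk1 : ∀ᵐ x ∂(volume.restrict (Set.Ioo (0 : ℝ) 1)), ‖k x‖ = 1) (i : Fin d) :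
      MemLp (fun x => k x i) 2 (volume.restrict (Set.Ioo (0 : ℝ) 1)) := by
    refine MemLp.of_bound (Measurable.aestronglyMeasurable (by fun_prop)) 1 ?_
    filter_upwards [hk1] with x hx
    exact hx ▸ PiLp.norm_apply_le (k x) i
  have hsum {k : ℝ → EuclideanSpace ℝ (Fin d)} (hk : Measurable k)
      (hk1 : ∀ᵐ x ∂(volume.restrict (Set.Ioo (0 : ℝ) 1)), ‖k x‖ = 1) :
      ∑ i, ∫ x in Set.Ioo (0 : ℝ) 1, k x i ^ 2 = 1 := by
    rw [← integral_finsetSum _ fun i _ => (hcoord hk hk1 i).integrable_sq]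
    simp_rw [← EuclideanSpace.real_norm_sq_eq]
    rw [integral_congr_ae (g := fun _ => (1 : ℝ)) (hk1.mono fun x hx => by simp [hx])]
    simp
  have hhint (i : Fin d) (x : ℝ) :
      Integrable (fun y => orderSign x y * h y i) (volume.restrict (Set.Ioo (0 : ℝ) 1)) :=
    ((hcoord hh hh1 i).integrable (by norm_num)).bdd_mul (c := 1)
      (measurable_uncurry_orderSign.comp measurable_prodMk_left).aestronglyMeasurable
      (.of_forall fun y => (norm_orderSign x y).le)
  have hexpand (x : ℝ) : ∫ y in Set.Ioo (0 : ℝ) 1, orderSign x y * ⟪g x, h y⟫ =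
      ∑ i, g x i * ∫ y in Set.Ioo (0 : ℝ) 1, orderSign x y * h y i := by
    simp_rw [← integral_const_mul]
    rw [← integral_finsetSum _ fun i _ => (hhint i x).const_mul _]
    refine integral_congr_ae (.of_forall fun y => ?_)
    simp only [PiLp.inner_apply, Finset.mul_sum, RCLike.inner_apply, conj_trivial]
    exact Finset.sum_congr rfl fun i _ => by ring
  have hu (i : Fin d) :=
    memLp_integral_orderSign_smul ((hcoord hh hh1 i).integrable (by norm_num)) 2
  simp only [smul_eq_mul] at hu
  simp_rw [hexpand]
  rw [integral_finsetSum]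
  swap
  · exact fun i _ => (hcoord hg hg1 i).integrable_mul (hu i)
  calc _ ≤ _ := Finset.sum_le_sum fun i _ =>
        integral_mul_integral_orderSign_mul_le (hcoord hg hg1 i) (hcoord hh hh1 i)
    _ = 2 / Real.pi := by
        rw [← Finset.mul_sum, Finset.sum_add_distrib, hsum hg hg1, hsum hh hh1]
        ring

lemma setIntegral_orderSign_mul_sin {x : ℝ} (hx : x ∈ Set.Ioo (0 : ℝ) 1) :
    ∫ y in Set.Ioo (0 : ℝ) 1, orderSign x y * Real.sin (Real.pi * y - Real.pi * x) =
      2 / Real.pi := by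
  have hsin (a b : ℝ) : ∫ y in a..b, Real.sin (Real.pi * y - Real.pi * x) =
      (Real.cos (Real.pi * a - Real.pi * x) - Real.cos (Real.pi * b - Real.pi * x)) / Real.pi := by
    rw [intervalIntegral.integral_comp_mul_sub Real.sin Real.pi_ne_zero, integral_sin, smul_eq_mul]
    ring
  have key := setIntegral_orderSign_smul_right
    (φ := fun y => Real.sin (Real.pi * y - Real.pi * x)) (by fun_prop) hx
  simp only [smul_eq_mul] at key
  rw [key, hsin, hsin]
  simp only [sub_self, Real.cos_zero, mul_one, mul_zero, zero_sub, Real.cos_neg, Real.cos_pi_sub]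
  ring

/-- Let `f : (0,1)×(0,1) → ℝ` be `1` if `x < y` and `-1` otherwise, and let `d ≥ 2`.
Then `2/π` is the greatest element of the set of values `∫∫ f(x,y) ⟨g(x), h(y)⟩`
over measurable `g, h : (0,1) → ℝ^d` with `‖g(x)‖ = 1`, `‖h(y)‖ = 1` a.e. -/
theorem bell_example1_dim_ge_two (d : ℕ) (hd : 2 ≤ d) :
    IsGreatest
      {I : ℝ | ∃ g h : ℝ → EuclideanSpace ℝ (Fin d), Measurable g ∧ Measurable h ∧
        (∀ᵐ x ∂(volume.restrict (Set.Ioo (0:ℝ) 1)), ‖g x‖ = 1) ∧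
        (∀ᵐ y ∂(volume.restrict (Set.Ioo (0:ℝ) 1)), ‖h y‖ = 1) ∧
        I = ∫ x in Set.Ioo (0:ℝ) 1, ∫ y in Set.Ioo (0:ℝ) 1,
              (if x < y then (1:ℝ) else -1) * ⟪g x, h y⟫}
      (2 / Real.pi) := by
  constructor
  · obtain ⟨n, rfl⟩ := Nat.exists_eq_add_of_le' hd
    let e (i : Fin (n + 2)) : EuclideanSpace ℝ (Fin (n + 2)) := EuclideanSpace.single i 1
    have hinner (a b c d : ℝ) : ⟪a • e 0 + b • e 1, c • e 0 + d • e 1⟫ = a * c + b * d := by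
      simp [e, inner_add_left, inner_add_right, inner_smul_left, inner_smul_right,
        EuclideanSpace.inner_single_left]
      ring
    have hnorm {a b : ℝ} (hab : a * a + b * b = 1) : ‖a • e 0 + b • e 1‖ = 1 := by
      rw [norm_eq_sqrt_real_inner, hinner, hab, Real.sqrt_one]
    refine ⟨fun x => Real.cos (Real.pi * x) • e 0 + Real.sin (Real.pi * x) • e 1,
      fun y => Real.sin (Real.pi * y) • e 0 + (-Real.cos (Real.pi * y)) • e 1,
      by fun_prop, by fun_prop, .of_forall fun x => hnorm ?_, .of_forall fun y => hnorm ?_, ?_⟩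
    · linarith [Real.sin_sq_add_cos_sq (Real.pi * x)]
    · linarith [Real.sin_sq_add_cos_sq (Real.pi * y)]
    · rw [setIntegral_congr_fun (g := fun _ => 2 / Real.pi) measurableSet_Ioo fun x hx => ?_]
      · simp
      · rw [← setIntegral_orderSign_mul_sin hx]
        refine integral_congr_ae (.of_forall fun y => ?_)
        simp only [hinner, orderSign, Real.sin_sub]
        ring
  · rintro _ ⟨g, h, hg, hh, hg1, hh1, rfl⟩
    exact integral_orderSign_mul_inner_le hg hh hg1 hh1
end

section
/- Let d ≥ 2 be a natural number. Then 2/π is the greatest element of the set { ∬_{𝕋×𝕋} f(x,y) ⟨g(x), h(y)⟩ dx dy : g, h : 𝕋 → ℝ^d measurable with ‖g(x)‖ = 1 and ‖h(y)‖ = 1 for almost every x, y }, where ⟨·,·⟩ and ‖·‖ are the Euclidean inner product and norm on ℝ^d. -/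
open MeasureTheory
open scoped RealInnerProductSpace

lemma UnitAddCircle.volume_real_univ : (volume : Measure UnitAddCircle).real Set.univ = 1 := by
  simp [measureReal_def]

/-- The function on the circle equal to `1` within distance `1/4` of the origin and to `-1`
elsewhere. -/
noncomputable def quarterSign (t : UnitAddCircle) : ℝ := if ‖t‖ < 1 / 4 then 1 else -1

lemma measurable_quarterSign : Measurable quarterSign :=
  Measurable.ite (measurableSet_lt measurable_norm measurable_const) measurable_const
    measurable_const

lemma abs_quarterSign (t : UnitAddCircle) : |quarterSign t| = 1 := by
  unfold quarterSign
  split_ifs <;> simp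

lemma quarterSign_coe_of_mem_Ioo {x : ℝ} (hx : x ∈ Set.Ioo (-1 / 4 : ℝ) (1 / 4)) :
    quarterSign (x : UnitAddCircle) = 1 := by
  have hround : round x = 0 := by
    rw [round_eq, Int.floor_eq_zero_iff]
    exact ⟨by linarith [hx.1], by linarith [hx.2]⟩
  rw [quarterSign, UnitAddCircle.norm_eq, hround, if_pos]
  rw [abs_lt]
  constructor <;> push_cast <;> linarith [hx.1, hx.2]

lemma quarterSign_coe_of_mem_Icc {x : ℝ} (hx : x ∈ Set.Icc (1 / 4 : ℝ) (3 / 4)) :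
    quarterSign (x : UnitAddCircle) = -1 := by
  rw [quarterSign, UnitAddCircle.norm_eq, if_neg]
  rw [not_lt, le_abs]
  rcases le_or_gt (round x) 0 with h | h
  · left
    have : (round x : ℝ) ≤ 0 := by exact_mod_cast h
    linarith [hx.1]
  · right
    have : (1 : ℝ) ≤ round x := by exact_mod_cast h
    linarith [hx.2]

lemma integral_mul_quarterSign {F : UnitAddCircle → ℂ} (hF : Continuous F) :
    ∫ t, F t * quarterSign t =
      (∫ x in (-1 / 4 : ℝ)..(1 / 4), F x) - ∫ x in (1 / 4 : ℝ)..(3 / 4), F x := by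
  have hcont : Continuous fun x : ℝ ↦ F x := hF.comp (AddCircle.continuous_mk' 1)
  have hpos : Set.EqOn (fun x : ℝ ↦ F x * quarterSign x) (fun x ↦ F x)
      (Set.Ioo (-1 / 4) (1 / 4)) := fun x hx ↦ by simp [quarterSign_coe_of_mem_Ioo hx]
  have hneg : Set.EqOn (fun x : ℝ ↦ F x * quarterSign x) (fun x ↦ -F x)
      (Set.Ioo (1 / 4) (3 / 4)) := fun x hx ↦ by
    simp [quarterSign_coe_of_mem_Icc (Set.Ioo_subset_Icc_self hx)]
  have hint (a b : ℝ) : IntervalIntegrable (fun x : ℝ ↦ F x * quarterSign x) volume a b := by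
    rw [intervalIntegrable_iff]
    refine (intervalIntegrable_iff.mp (hcont.intervalIntegrable a b)).mul_bdd (c := 1) ?_ ?_
    · exact (Complex.measurable_ofReal.comp
        (measurable_quarterSign.comp AddCircle.measurable_mk')).aestronglyMeasurable
    · exact Filter.Eventually.of_forall fun x ↦ by simp [abs_quarterSign]
  rw [← UnitAddCircle.intervalIntegral_preimage (-1 / 4),
    ← intervalIntegral.integral_add_adjacent_intervals (hint _ (1 / 4)) (hint _ _),
    intervalIntegral.integral_congr_Ioo_of_le (by norm_num) hpos,
    show (-1 / 4 + 1 : ℝ) = 3 / 4 by norm_num,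
    intervalIntegral.integral_congr_Ioo_of_le (by norm_num) hneg, intervalIntegral.integral_neg,
    sub_eq_add_neg]

lemma integral_fourier_mul_quarterSign {n : ℤ} (hn : n ≠ 0) :
    ∫ t : UnitAddCircle, fourier n t * quarterSign t =
      2 * Complex.sin (Real.pi * n / 2) / (Real.pi * n) := by
  have hπ : (Real.pi : ℂ) ≠ 0 := by exact_mod_cast Real.pi_ne_zero
  have hn' : (n : ℂ) ≠ 0 := by exact_mod_cast hn
  rw [integral_mul_quarterSign (map_continuous _)]
  have hexp (x : ℝ) : fourier n (x : UnitAddCircle) =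
      Complex.exp (2 * Real.pi * Complex.I * n * x) := by
    simp
  simp only [hexp]
  have hc : (2 * Real.pi * Complex.I * n : ℂ) ≠ 0 := by
    simp [hπ, hn']
  rw [integral_exp_mul_complex hc, integral_exp_mul_complex hc, Complex.sin]
  have h1 : (2 * Real.pi * Complex.I * n * ((1 / 4 : ℝ) : ℂ)) =
      Real.pi * n / 2 * Complex.I := by push_cast; ring
  have h2 : (2 * Real.pi * Complex.I * n * ((-1 / 4 : ℝ) : ℂ)) =
      -(Real.pi * n / 2) * Complex.I := by push_cast; ring
  have h3 : (2 * Real.pi * Complex.I * n * ((3 / 4 : ℝ) : ℂ)) =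
      -(Real.pi * n / 2) * Complex.I + n * (2 * Real.pi * Complex.I) := by push_cast; ring
  rw [h1, h2, h3, Complex.exp_add, Complex.exp_int_mul_two_pi_mul_I]
  field_simp
  linear_combination (2 * Complex.exp (Real.pi * n * Complex.I / 2) -
    2 * Complex.exp (-(Real.pi * n * Complex.I / 2))) * Complex.I_sq

lemma integral_quarterSign : ∫ t, (quarterSign t : ℂ) = 0 := by
  have h := integral_mul_quarterSign (F := fun _ ↦ 1) continuous_const
  simp only [one_mul] at h
  rw [h]
  norm_num

lemma fourierCoeff_eq_integral_volume (f : UnitAddCircle → ℂ) (n : ℤ) :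
    fourierCoeff f n = ∫ t, fourier (-n) t * f t := by
  simp [fourierCoeff, AddCircle.integral_haarAddCircle]

lemma norm_fourierCoeff_quarterSign_le (n : ℤ) :
    ‖fourierCoeff (fun t ↦ (quarterSign t : ℂ)) n‖ ≤ 2 / Real.pi := by
  rw [fourierCoeff_eq_integral_volume]
  rcases eq_or_ne n 0 with rfl | hn
  · have : ∫ t, (fourier (-0) t : ℂ) * quarterSign t = 0 := by
      simpa using integral_quarterSign
    rw [this, norm_zero]
    positivity
  · rw [integral_fourier_mul_quarterSign (neg_ne_zero.mpr hn)]
    have hsin : ‖Complex.sin (Real.pi * ((-n : ℤ) : ℂ) / 2)‖ ≤ 1 := by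
      rw [show (Real.pi * ((-n : ℤ) : ℂ) / 2) = ((Real.pi * ((-n : ℤ) : ℝ) / 2 : ℝ) : ℂ) by
        push_cast; rfl, ← Complex.ofReal_sin, Complex.norm_real]
      exact Real.abs_sin_le_one _
    have hone : (1 : ℝ) ≤ ‖((-n : ℤ) : ℂ)‖ := by
      rw [Complex.norm_intCast]
      exact_mod_cast Int.one_le_abs (neg_ne_zero.mpr hn)
    rw [norm_div, norm_mul, norm_mul, Complex.norm_ofNat, Complex.norm_real,
      Real.norm_of_nonneg Real.pi_pos.le]
    gcongr
    · linarith
    · nlinarith [Real.pi_pos]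

lemma fourier_sub_apply (n : ℤ) (x y : UnitAddCircle) :
    (fourier n (x - y) : ℂ) = fourier n x * fourier (-n) y := by
  simp [fourier_apply, sub_eq_add_neg, AddCircle.toCircle_add]

lemma fourierCoeff_convolution {k v : UnitAddCircle → ℂ} (hk : Integrable k) (hv : Integrable v)
    (n : ℤ) : fourierCoeff (fun x ↦ ∫ y, v y * k (x - y)) n =
      fourierCoeff k n * fourierCoeff v n := by
  simp only [fourierCoeff_eq_integral_volume, ← integral_const_mul]
  rw [integral_integral_swap]
  · have h (y : UnitAddCircle) : ∫ x, fourier (-n) x * (v y * k (x - y)) =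
        ∫ x, fourier (-n) y * v y * (fourier (-n) x * k x) := by
      rw [← integral_add_right_eq_self _ y]
      congr 1 with x
      simp [fourier_apply, smul_add, AddCircle.toCircle_add]
      ring
    simp only [h, integral_const_mul]
    rw [integral_mul_const, mul_comm]
  · have := hv.convolution_integrand (ContinuousLinearMap.mul ℝ ℂ) hk
    refine this.bdd_mul (c := 1) ?_ ?_
    · exact ((map_continuous (fourier (-n))).comp continuous_fst).aestronglyMeasurable
    · exact Filter.Eventually.of_forall fun x ↦ (Circle.norm_coe _).le

lemma hasSum_sq_fourierCoeff_of_memLp {f : UnitAddCircle → ℂ} (hf : MemLp f 2) :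
    HasSum (fun n ↦ ‖fourierCoeff f n‖ ^ 2) (∫ t, ‖f t‖ ^ 2) := by
  have h := hf.haarAddCircle
  convert hasSum_sq_fourierCoeff h.toLp using 1
  · simp [fourierCoeff_congr_ae h.coeFn_toLp]
  · have : ∫ t, ‖f t‖ ^ 2 = ∫ t, ‖f t‖ ^ 2 ∂AddCircle.haarAddCircle := by
      simp [AddCircle.integral_haarAddCircle]
    rw [this]
    apply integral_congr_ae
    filter_upwards [h.coeFn_toLp] with x hx
    simp [hx]

lemma integral_norm_sq_convolution_le {k v : UnitAddCircle → ℂ} {C : ℝ} (hk : Integrable k)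
    (hv : MemLp v 2) (hkv : MemLp (fun x ↦ ∫ y, v y * k (x - y)) 2)
    (hC : ∀ n, ‖fourierCoeff k n‖ ≤ C) :
    ∫ x, ‖∫ y, v y * k (x - y)‖ ^ 2 ≤ C ^ 2 * ∫ y, ‖v y‖ ^ 2 := by
  refine hasSum_le (fun n ↦ ?_) (hasSum_sq_fourierCoeff_of_memLp hkv)
    ((hasSum_sq_fourierCoeff_of_memLp hv).mul_left (C ^ 2))
  rw [fourierCoeff_convolution hk (hv.integrable one_le_two), norm_mul, mul_pow]
  gcongr
  exact hC n

/-- The convolution of a real function on the circle with `quarterSign`. -/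
noncomputable def quarterSignConv (v : UnitAddCircle → ℝ) (x : UnitAddCircle) : ℝ :=
  ∫ y, v y * quarterSign (x - y)

section quarterSignConv

variable {v : UnitAddCircle → ℝ}

lemma integrable_mul_quarterSign_sub (hv : Integrable v) (x : UnitAddCircle) :
    Integrable fun y ↦ v y * quarterSign (x - y) :=
  hv.mul_bdd (c := 1)
    (measurable_quarterSign.comp (measurable_const.sub measurable_id)).aestronglyMeasurable
    (Filter.Eventually.of_forall fun _ ↦ (abs_quarterSign _).le)

lemma measurable_quarterSignConv (hv : Measurable v) : Measurable (quarterSignConv v) := by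
  have h : Measurable fun p : UnitAddCircle × UnitAddCircle ↦ v p.2 * quarterSign (p.1 - p.2) :=
    (hv.comp measurable_snd).mul
      (measurable_quarterSign.comp (measurable_fst.sub measurable_snd))
  exact h.stronglyMeasurable.integral_prod_right'.measurable

lemma abs_quarterSignConv_le (hv : ∀ᵐ y, |v y| ≤ 1) (x : UnitAddCircle) :
    |quarterSignConv v x| ≤ 1 := by
  have h := norm_integral_le_of_norm_le_const (μ := volume)
    (f := fun y ↦ v y * quarterSign (x - y)) (C := 1) (by
      filter_upwards [hv] with y hy
      simpa [abs_mul, abs_quarterSign] using hy)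
  simpa [quarterSignConv, UnitAddCircle.volume_real_univ] using h

lemma integral_sq_quarterSignConv_le (hvm : Measurable v) (hv : ∀ᵐ y, |v y| ≤ 1) :
    ∫ x, quarterSignConv v x ^ 2 ≤ (2 / Real.pi) ^ 2 * ∫ y, v y ^ 2 := by
  have hconv : (fun x ↦ ∫ y, (v y : ℂ) * quarterSign (x - y)) =
      fun x ↦ (quarterSignConv v x : ℂ) := by
    funext x
    rw [quarterSignConv, ← integral_complex_ofReal]
    simp
  have hmem {f : UnitAddCircle → ℝ} (hfm : Measurable f) (hf : ∀ᵐ y, |f y| ≤ 1) :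
      MemLp (fun y ↦ (f y : ℂ)) 2 :=
    MemLp.of_bound (Complex.measurable_ofReal.comp hfm).aestronglyMeasurable 1 (by simpa using hf)
  have hk : Integrable fun t ↦ (quarterSign t : ℂ) :=
    (hmem measurable_quarterSign
      (Filter.Eventually.of_forall fun t ↦ (abs_quarterSign t).le)).integrable one_le_two
  have h := integral_norm_sq_convolution_le hk (hmem hvm hv)
    (by
      rw [hconv]
      exact hmem (measurable_quarterSignConv hvm)
        (Filter.Eventually.of_forall (abs_quarterSignConv_le hv)))
    norm_fourierCoeff_quarterSign_le
  simpa [congrFun hconv] using h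

end quarterSignConv

lemma integrable_of_ae_abs_le_one {f : UnitAddCircle → ℝ} (hfm : Measurable f)
    (hf : ∀ᵐ x, |f x| ≤ 1) : Integrable f :=
  .of_bound hfm.aestronglyMeasurable 1 hf

lemma integrable_mul_quarterSignConv {u v : UnitAddCircle → ℝ} (hum : Measurable u)
    (hvm : Measurable v) (hu : ∀ᵐ x, |u x| ≤ 1) (hv : ∀ᵐ y, |v y| ≤ 1) :
    Integrable fun x ↦ u x * quarterSignConv v x :=
  (integrable_of_ae_abs_le_one hum hu).mul_bdd (c := 1)
    (measurable_quarterSignConv hvm).aestronglyMeasurable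
    (Filter.Eventually.of_forall (abs_quarterSignConv_le hv))

lemma integral_mul_quarterSignConv_le {u v : UnitAddCircle → ℝ} (hum : Measurable u)
    (hvm : Measurable v) (hu : ∀ᵐ x, |u x| ≤ 1) (hv : ∀ᵐ y, |v y| ≤ 1) :
    ∫ x, u x * quarterSignConv v x ≤
      1 / Real.pi * (∫ x, u x ^ 2) + 1 / Real.pi * ∫ y, v y ^ 2 := by
  have hπ := Real.pi_pos
  have hsq {f : UnitAddCircle → ℝ} (hfm : Measurable f) (hf : ∀ᵐ x, |f x| ≤ 1) :
      Integrable fun x ↦ f x ^ 2 :=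
    integrable_of_ae_abs_le_one (hfm.pow_const 2) <| by
      filter_upwards [hf] with x hx
      rw [abs_pow]
      exact pow_le_one₀ (abs_nonneg _) hx
  have hu2 := (hsq hum hu).const_mul (1 / Real.pi)
  have hw2 := (hsq (measurable_quarterSignConv hvm)
    (Filter.Eventually.of_forall (abs_quarterSignConv_le hv))).const_mul (Real.pi / 4)
  calc ∫ x, u x * quarterSignConv v x
      ≤ ∫ x, (1 / Real.pi * u x ^ 2 + Real.pi / 4 * quarterSignConv v x ^ 2) := by
        refine integral_mono (integrable_mul_quarterSignConv hum hvm hu hv) (hu2.add hw2)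
          fun x ↦ ?_
        have h : 1 / Real.pi * u x ^ 2 + Real.pi / 4 * quarterSignConv v x ^ 2 -
            u x * quarterSignConv v x =
            1 / Real.pi * (u x - Real.pi / 2 * quarterSignConv v x) ^ 2 := by
          field_simp
          ring
        have : 0 ≤ 1 / Real.pi * (u x - Real.pi / 2 * quarterSignConv v x) ^ 2 := by positivity
        simp only
        linarith
    _ = 1 / Real.pi * (∫ x, u x ^ 2) + Real.pi / 4 * ∫ x, quarterSignConv v x ^ 2 := by
        rw [integral_add hu2 hw2, integral_const_mul, integral_const_mul]
    _ ≤ 1 / Real.pi * (∫ x, u x ^ 2) +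
          Real.pi / 4 * ((2 / Real.pi) ^ 2 * ∫ y, v y ^ 2) := by
        gcongr
        exact integral_sq_quarterSignConv_le hvm hv
    _ = _ := by
        field_simp
        ring

section EuclideanSpace

variable {d : ℕ} {g h : UnitAddCircle → EuclideanSpace ℝ (Fin d)}

lemma measurable_euclideanSpace_apply (hg : Measurable g) (i : Fin d) :
    Measurable fun x ↦ g x i :=
  (EuclideanSpace.proj (𝕜 := ℝ) i).continuous.measurable.comp hg

lemma ae_abs_euclideanSpace_apply_le_one (hg : ∀ᵐ x, ‖g x‖ = 1) (i : Fin d) :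
    ∀ᵐ x, |g x i| ≤ 1 := by
  filter_upwards [hg] with x hx
  simpa [hx] using PiLp.norm_apply_le (g x) i

lemma sum_integral_sq_eq_one (hgm : Measurable g) (hg : ∀ᵐ x, ‖g x‖ = 1) :
    ∑ i, ∫ x, g x i ^ 2 = 1 := by
  rw [← integral_finsetSum]
  · have : ∀ᵐ x, ∑ i, g x i ^ 2 = 1 := by
      filter_upwards [hg] with x hx
      rw [← EuclideanSpace.real_norm_sq_eq, hx, one_pow]
    simp [integral_congr_ae this, UnitAddCircle.volume_real_univ]
  · intro i _
    refine integrable_of_ae_abs_le_one ((measurable_euclideanSpace_apply hgm i).pow_const 2) ?_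
    filter_upwards [ae_abs_euclideanSpace_apply_le_one hg i] with x hx
    rw [abs_pow]
    exact pow_le_one₀ (abs_nonneg _) hx

lemma integral_integral_quarterSign_mul_inner (hgm : Measurable g) (hhm : Measurable h)
    (hg : ∀ᵐ x, ‖g x‖ = 1) (hh : ∀ᵐ y, ‖h y‖ = 1) :
    ∫ x, ∫ y, quarterSign (x - y) * ⟪g x, h y⟫ =
      ∑ i, ∫ x, g x i * quarterSignConv (fun y ↦ h y i) x := by
  rw [← integral_finsetSum _ fun i _ ↦ integrable_mul_quarterSignConv
    (measurable_euclideanSpace_apply hgm i) (measurable_euclideanSpace_apply hhm i)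
    (ae_abs_euclideanSpace_apply_le_one hg i) (ae_abs_euclideanSpace_apply_le_one hh i)]
  congr 1 with x
  simp only [quarterSignConv, ← integral_const_mul]
  rw [← integral_finsetSum _ fun i _ ↦ (integrable_mul_quarterSign_sub
    (integrable_of_ae_abs_le_one (measurable_euclideanSpace_apply hhm i)
      (ae_abs_euclideanSpace_apply_le_one hh i)) x).const_mul _]
  congr 1 with y
  rw [PiLp.inner_apply, Finset.mul_sum]
  refine Finset.sum_congr rfl fun i _ ↦ ?_
  simp
  ring

lemma integral_integral_quarterSign_mul_inner_le (hgm : Measurable g) (hhm : Measurable h)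
    (hg : ∀ᵐ x, ‖g x‖ = 1) (hh : ∀ᵐ y, ‖h y‖ = 1) :
    ∫ x, ∫ y, quarterSign (x - y) * ⟪g x, h y⟫ ≤ 2 / Real.pi := by
  rw [integral_integral_quarterSign_mul_inner hgm hhm hg hh]
  calc ∑ i, ∫ x, g x i * quarterSignConv (fun y ↦ h y i) x
      ≤ ∑ i, (1 / Real.pi * (∫ x, g x i ^ 2) + 1 / Real.pi * ∫ y, h y i ^ 2) :=
        Finset.sum_le_sum fun i _ ↦ integral_mul_quarterSignConv_le
          (measurable_euclideanSpace_apply hgm i) (measurable_euclideanSpace_apply hhm i)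
          (ae_abs_euclideanSpace_apply_le_one hg i) (ae_abs_euclideanSpace_apply_le_one hh i)
    _ = 2 / Real.pi := by
        rw [Finset.sum_add_distrib, ← Finset.mul_sum, ← Finset.mul_sum,
          sum_integral_sq_eq_one hgm hg, sum_integral_sq_eq_one hhm hh]
        ring

/-- The standard embedding of the circle in the plane spanned by two coordinates of `ℝ^d`. -/
noncomputable def circleEmbedding (i j : Fin d) (x : UnitAddCircle) : EuclideanSpace ℝ (Fin d) :=
  EuclideanSpace.single i (fourier 1 x : ℂ).re + EuclideanSpace.single j (fourier 1 x : ℂ).im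

lemma measurable_circleEmbedding (i j : Fin d) : Measurable (circleEmbedding i j) := by
  have hf : Continuous fun x : UnitAddCircle ↦ (fourier 1 x : ℂ) := map_continuous _
  have hs (i : Fin d) : Continuous fun a : ℝ ↦ EuclideanSpace.single i a :=
    (PiLp.continuous_toLp 2 _).comp (continuous_single (A := fun _ : Fin d ↦ ℝ) i)
  exact (((hs i).comp (Complex.continuous_re.comp hf)).add
    ((hs j).comp (Complex.continuous_im.comp hf))).measurable

lemma inner_circleEmbedding {i j : Fin d} (hij : i ≠ j) (x y : UnitAddCircle) :
    ⟪circleEmbedding i j x, circleEmbedding i j y⟫ = (fourier 1 (x - y) : ℂ).re := by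
  rw [fourier_sub_apply, fourier_neg]
  simp [circleEmbedding, inner_add_left, inner_add_right, hij, hij.symm, EuclideanSpace.inner_single_left]

lemma norm_circleEmbedding {i j : Fin d} (hij : i ≠ j) (x : UnitAddCircle) :
    ‖circleEmbedding i j x‖ = 1 := by
  have h : ‖circleEmbedding i j x‖ ^ 2 = 1 := by
    rw [← real_inner_self_eq_norm_sq, inner_circleEmbedding hij]
    simp
  exact (pow_eq_one_iff_of_nonneg (norm_nonneg _) two_ne_zero).mp h

lemma integral_quarterSign_mul_re_fourier :
    ∫ t : UnitAddCircle, quarterSign t * (fourier 1 t : ℂ).re = 2 / Real.pi := by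
  have hint : Integrable fun t : UnitAddCircle ↦ (fourier 1 t : ℂ) * quarterSign t := by
    refine .of_bound ?_ 1 (Filter.Eventually.of_forall fun t ↦ ?_)
    · exact ((map_continuous (fourier 1)).measurable.mul
        (Complex.measurable_ofReal.comp measurable_quarterSign)).aestronglyMeasurable
    · rw [norm_mul, Complex.norm_real, Real.norm_eq_abs, abs_quarterSign, mul_one]
      exact (Circle.norm_coe _).le
  have h := integral_re hint
  rw [integral_fourier_mul_quarterSign one_ne_zero] at h
  convert h using 1
  · congr 1 with t
    simp [mul_comm]
  · have : (2 * Complex.sin (Real.pi * ((1 : ℤ) : ℂ) / 2) / (Real.pi * ((1 : ℤ) : ℂ))) =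
        ((2 / Real.pi : ℝ) : ℂ) := by
      simp
    rw [this]
    simp

lemma integral_integral_quarterSign_mul_inner_circleEmbedding {i j : Fin d} (hij : i ≠ j) :
    ∫ x, ∫ y, quarterSign (x - y) * ⟪circleEmbedding i j x, circleEmbedding i j y⟫ =
      2 / Real.pi := by
  simp only [inner_circleEmbedding hij]
  have h (x : UnitAddCircle) : ∫ y, quarterSign (x - y) * (fourier 1 (x - y) : ℂ).re =
      2 / Real.pi := by
    rw [integral_sub_left_eq_self (fun t ↦ quarterSign t * (fourier 1 t : ℂ).re) volume x,
      integral_quarterSign_mul_re_fourier]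
  simp only [h]
  simp [UnitAddCircle.volume_real_univ]

end EuclideanSpace

/-- Let `𝕋 = ℝ/ℤ` with its Haar probability measure, `f(x,y) = 1` if `dist x y < 1/4`
and `-1` otherwise, and let `d ≥ 2`. Then `2/π` is the greatest element of the set of
values `∬ f(x,y) ⟨g(x), h(y)⟩` over measurable `g, h : 𝕋 → ℝ^d` with unit norm a.e. -/
theorem bell_example2_dim_ge_two (d : ℕ) (hd : 2 ≤ d) :
    IsGreatest
      {I : ℝ | ∃ g h : UnitAddCircle → EuclideanSpace ℝ (Fin d),
        Measurable g ∧ Measurable h ∧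
        (∀ᵐ x : UnitAddCircle, ‖g x‖ = 1) ∧
        (∀ᵐ y : UnitAddCircle, ‖h y‖ = 1) ∧
        I = ∫ x : UnitAddCircle, ∫ y : UnitAddCircle,
              (if dist x y < 1/4 then (1:ℝ) else -1) * ⟪g x, h y⟫}
      (2 / Real.pi) := by
  have hker (x y : UnitAddCircle) :
      (if dist x y < 1 / 4 then (1 : ℝ) else -1) = quarterSign (x - y) := by
    rw [quarterSign, dist_eq_norm]
  simp only [hker]
  constructor
  · have hij : (⟨0, by lia⟩ : Fin d) ≠ ⟨1, by lia⟩ := by simp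
    have hnorm := Filter.Eventually.of_forall (f := ae volume) (norm_circleEmbedding hij)
    exact ⟨_, _, measurable_circleEmbedding _ _, measurable_circleEmbedding _ _, hnorm, hnorm,
      (integral_integral_quarterSign_mul_inner_circleEmbedding hij).symm⟩
  · rintro _ ⟨g, h, hgm, hhm, hg, hh, rfl⟩
    exact integral_integral_quarterSign_mul_inner_le hgm hhm hg hh
end

section
/- Let H be a real inner product space. Then for all measurable functions g, h : (0,1) → H with ‖g(x)‖ = 1 and ‖h(y)‖ = 1 for almost every x, y, one has ∫₀¹∫₀¹ f(x,y) ⟨g(x), h(y)⟩ dx dy ≤ 2/π. -/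
open MeasureTheory
open scoped RealInnerProductSpace

open InnerProductGeometry in
theorem angle_le_sum_angle {V : Type*} [NormedAddCommGroup V] [InnerProductSpace ℝ V]
    (w : ℕ → V) (n : ℕ) (hw : w 0 ≠ 0) :
    angle (w 0) (w n) ≤ ∑ j ∈ Finset.range n, angle (w j) (w (j + 1)) := by
  induction n with
  | zero => simp [angle_self hw]
  | succ n ih =>
    rw [Finset.sum_range_succ]
    linarith [angle_le_angle_add_angle (w 0) (w n) (w (n + 1))]

theorem sum_range_add_of_periodic {M : Type*} [AddCommMonoid M] {F : ℕ → M} {n : ℕ}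
    (hF : Function.Periodic F n) (j : ℕ) :
    ∑ k ∈ Finset.range n, F (k + j) = ∑ k ∈ Finset.range n, F k := by
  induction j with
  | zero => simp
  | succ j ih =>
    rw [← ih]
    cases n with
    | zero => simp
    | succ n =>
      rw [Finset.sum_range_succ, Finset.sum_range_succ' (fun k => F (k + j))]
      congr 1
      · exact Finset.sum_congr rfl fun k _ => by congr 1; ring
      · rw [← hF (0 + j)]; congr 1; ring

open InnerProductGeometry in
/-- Discrete Wirtinger inequality for antiperiodic sequences. -/
theorem wirtinger_antiperiodic {E : Type*} [NormedAddCommGroup E] [InnerProductSpace ℝ E]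
    {u : ℕ → E} {n : ℕ} (hn : 0 < n) (hu : Function.Antiperiodic u n) :
    2 * (1 - Real.cos (Real.pi / n)) * ∑ k ∈ Finset.range n, ‖u k‖ ^ 2 ≤
      ∑ k ∈ Finset.range n, ‖u (k + 1) - u k‖ ^ 2 := by
  let w : ℕ → PiLp 2 (fun _ : Fin n => E) := fun j => WithLp.toLp 2 fun k => u (k + j)
  have hper : ∀ i, Function.Periodic (fun k => ⟪u k, u (k + i)⟫) n := fun i k => by
    have : k + n + i = k + i + n := by ring
    simp only [this, hu k, hu (k + i), inner_neg_neg]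
  have hinner : ∀ i j, ⟪w j, w (j + i)⟫ = ∑ k ∈ Finset.range n, ⟪u k, u (k + i)⟫ := fun i j => by
    rw [← sum_range_add_of_periodic (hper i) j, PiLp.inner_apply, ← Fin.sum_univ_eq_sum_range
      (fun k => ⟪u (k + j), u (k + j + i)⟫)]
    simp [w, add_assoc]
  have hnorm : ∀ j, ‖w j‖ ^ 2 = ∑ k ∈ Finset.range n, ‖u k‖ ^ 2 := fun j => by
    rw [← real_inner_self_eq_norm_sq]
    simpa using hinner 0 j
  have hdist : ∑ k ∈ Finset.range n, ‖u (k + 1) - u k‖ ^ 2 = ‖w 1 - w 0‖ ^ 2 := by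
    rw [PiLp.norm_sq_eq_of_L2, ← Fin.sum_univ_eq_sum_range (fun k => ‖u (k + 1) - u k‖ ^ 2)]
    simp [w]
  by_cases hw : w 0 = 0
  · rw [← hnorm 0, hw]
    simpa using Finset.sum_nonneg fun k _ => sq_nonneg ‖u (k + 1) - u k‖
  have hnorm' : ∀ j, ‖w j‖ = ‖w 0‖ := fun j =>
    (sq_eq_sq₀ (norm_nonneg _) (norm_nonneg _)).1 ((hnorm j).trans (hnorm 0).symm)
  have hangle : ∀ j, angle (w j) (w (j + 1)) = angle (w 0) (w 1) := fun j => by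
    have := hinner 1 0
    rw [zero_add] at this
    rw [angle, angle, hnorm' j, hnorm' (j + 1), hnorm' 1, hinner 1 j, this]
  have hneg : w n = -w 0 := by
    ext k
    simp [w, hu (k : ℕ)]
  have hpi : Real.pi / n ≤ angle (w 0) (w 1) := by
    have := angle_le_sum_angle w n hw
    rw [hneg, angle_self_neg_of_nonzero hw] at this
    simp only [hangle, Finset.sum_const, Finset.card_range, nsmul_eq_mul] at this
    rwa [div_le_iff₀' (by positivity)]
  have hcos : Real.cos (angle (w 0) (w 1)) ≤ Real.cos (Real.pi / n) :=
    Real.cos_le_cos_of_nonneg_of_le_pi (by positivity) (angle_le_pi _ _) hpi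
  have hin := cos_angle_mul_norm_mul_norm (w 0) (w 1)
  rw [hnorm' 1] at hin
  rw [hdist, ← hnorm 0, norm_sub_sq_real, hnorm' 1, real_inner_comm, ← hin]
  nlinarith [mul_le_mul_of_nonneg_right hcos (sq_nonneg ‖w 0‖)]

theorem two_mul_sin_mul_sum_norm_le {E : Type*} [NormedAddCommGroup E] [InnerProductSpace ℝ E]
    {u : ℕ → E} {n : ℕ} (hn : 0 < n) (hu : Function.Antiperiodic u n) {δ : ℝ} (hδ : 0 ≤ δ)
    (hstep : ∀ k < n, ‖u (k + 1) - u k‖ ≤ δ) :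
    2 * Real.sin (Real.pi / n / 2) * ∑ k ∈ Finset.range n, ‖u k‖ ≤ n * δ := by
  have hw := wirtinger_antiperiodic hn hu
  have hs : ∑ k ∈ Finset.range n, ‖u (k + 1) - u k‖ ^ 2 ≤ n * δ ^ 2 := by
    simpa using Finset.sum_le_card_nsmul (Finset.range n) (fun k => ‖u (k + 1) - u k‖ ^ 2) (δ ^ 2)
      fun k hk => pow_le_pow_left₀ (norm_nonneg _) (hstep k (Finset.mem_range.1 hk)) 2
  have hcs : (∑ k ∈ Finset.range n, ‖u k‖) ^ 2 ≤ n * ∑ k ∈ Finset.range n, ‖u k‖ ^ 2 := by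
    simpa using sq_sum_le_card_mul_sum_sq (s := Finset.range n) (f := fun k => ‖u k‖)
  have hsin : 2 * (1 - Real.cos (Real.pi / n)) = (2 * Real.sin (Real.pi / n / 2)) ^ 2 := by
    rw [mul_pow, Real.sin_sq_eq_half_sub]
    ring_nf
  rw [hsin] at hw
  refine le_of_sq_le_sq ?_ (by positivity)
  rw [mul_pow]
  calc _ ≤ (2 * Real.sin (Real.pi / n / 2)) ^ 2 * (n * ∑ k ∈ Finset.range n, ‖u k‖ ^ 2) := by
        gcongr
    _ ≤ n * (n * δ ^ 2) := by
        rw [mul_left_comm]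
        exact mul_le_mul_of_nonneg_left (hw.trans hs) (by positivity)
    _ = _ := by ring

/-- Integral of the norm of a Lipschitz path joining antipodal points. -/
theorem integral_norm_le_of_lipschitzOnWith_of_eq_neg {E : Type*} [NormedAddCommGroup E]
    [InnerProductSpace ℝ E] {Φ : ℝ → E} {C : NNReal}
    (hΦ : LipschitzOnWith C Φ (Set.Icc 0 1)) (hneg : Φ 1 = -Φ 0) :
    ∫ x in (0:ℝ)..1, ‖Φ x‖ ≤ C / Real.pi := by
  set I := ∫ x in (0:ℝ)..1, ‖Φ x‖ with hI
  have key : ∀ n : ℕ, 0 < n →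
      Real.pi * Real.sinc (Real.pi / n / 2) * (I - C * (n : ℝ)⁻¹) ≤ C := by
    intro n hn
    have hn' : (0 : ℝ) < n := by positivity
    let u : ℕ → E := fun k => (-1 : ℝ) ^ (k / n) • Φ ((k % n : ℕ) / n)
    have hu : Function.Antiperiodic u n := fun k => by
      simp [u, Nat.add_div_right k hn, pow_succ]
    have hul : ∀ k < n, u k = Φ (k / n) := fun k hk => by
      simp [u, Nat.div_eq_of_lt hk, Nat.mod_eq_of_lt hk]
    have hul' : ∀ k ≤ n, u k = Φ (k / n) := fun k hk => by
      rcases hk.lt_or_eq with hk | rfl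
      · exact hul k hk
      · have := hu 0
        rw [zero_add] at this
        rw [this, hul 0 hn, div_self hn'.ne', hneg]
        simp
    have hmem : ∀ k ≤ n, (k / n : ℝ) ∈ Set.Icc (0:ℝ) 1 := fun k hk =>
      ⟨by positivity, (div_le_one hn').2 (by exact_mod_cast hk)⟩
    have hlen : ∀ k : ℕ, ((k + 1 : ℕ) : ℝ) / n - k / n = (n : ℝ)⁻¹ := fun k => by
      push_cast; field_simp; ring
    have hstep : ∀ k < n, ‖u (k + 1) - u k‖ ≤ C * (n : ℝ)⁻¹ := fun k hk => by
      rw [hul' _ hk, hul k hk, ← hlen k]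
      have := hΦ.norm_sub_le (hmem _ hk) (hmem k hk.le)
      rwa [hlen, Real.norm_of_nonneg (by positivity), ← hlen k] at this
    have hle : ∀ k : ℕ, (k / n : ℝ) ≤ ((k + 1 : ℕ) : ℝ) / n := fun k => by
      have := hlen k
      have : (0:ℝ) < (n : ℝ)⁻¹ := by positivity
      linarith
    have hcont : ∀ k < n, ContinuousOn (fun x => ‖Φ x‖)
        (Set.uIcc (k / n : ℝ) ((k + 1 : ℕ) / n)) := fun k hk =>
      hΦ.continuousOn.norm.mono
        (Set.uIcc_subset_Icc (hmem k hk.le) (hmem (k + 1) hk))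
    have hsum : I = ∑ k ∈ Finset.range n, ∫ x in (k / n : ℝ)..((k + 1 : ℕ) / n), ‖Φ x‖ := by
      rw [intervalIntegral.sum_integral_adjacent_intervals (a := fun k : ℕ => (k / n : ℝ))
        fun k hk => (hcont k hk).intervalIntegrable]
      simp [hI, hn'.ne']
    have hpiece : ∀ k ∈ Finset.range n, ∫ x in (k / n : ℝ)..((k + 1 : ℕ) / n), ‖Φ x‖ ≤
        (n : ℝ)⁻¹ * (‖u k‖ + C * (n : ℝ)⁻¹) := fun k hk => by
      rw [Finset.mem_range] at hk
      have := intervalIntegral.integral_mono_on (μ := volume) (hle k) (hcont k hk).intervalIntegrable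
        (intervalIntegrable_const (c := ‖u k‖ + C * (n : ℝ)⁻¹)) fun x hx => by
          have hx01 : x ∈ Set.Icc (0:ℝ) 1 :=
            ⟨(hmem k hk.le).1.trans hx.1, hx.2.trans (hmem (k + 1) hk).2⟩
          have h1 := hΦ.norm_sub_le hx01 (hmem k hk.le)
          have h2 : ‖x - k / n‖ ≤ (n : ℝ)⁻¹ := by
            rw [Real.norm_of_nonneg (by linarith [hx.1]), ← hlen k]
            linarith [hx.2]
          have h3 := norm_le_norm_add_norm_sub' (Φ x) (Φ (k / n))
          have h4 := mul_le_mul_of_nonneg_left h2 C.coe_nonneg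
          rw [hul k hk]
          linarith
      rwa [intervalIntegral.integral_const, hlen, smul_eq_mul] at this
    have hriemann : n * (I - C * (n : ℝ)⁻¹) ≤ ∑ k ∈ Finset.range n, ‖u k‖ := by
      have := Finset.sum_le_sum hpiece
      rw [← hsum, ← Finset.mul_sum, Finset.sum_add_distrib, Finset.sum_const, Finset.card_range,
        nsmul_eq_mul, le_inv_mul_iff₀ hn'] at this
      linarith [mul_sub (n : ℝ) I (C * (n : ℝ)⁻¹)]
    have hsinc : Real.pi * Real.sinc (Real.pi / n / 2) = 2 * Real.sin (Real.pi / n / 2) * n := by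
      rw [Real.sinc_of_ne_zero (by positivity)]
      field_simp
    have hsin : 0 ≤ Real.sin (Real.pi / n / 2) := by
      refine Real.sin_nonneg_of_nonneg_of_le_pi (by positivity) ?_
      have : Real.pi / n ≤ Real.pi := div_le_self Real.pi_pos.le (by exact_mod_cast hn)
      linarith [Real.pi_pos]
    rw [hsinc, mul_assoc]
    refine (mul_le_mul_of_nonneg_left hriemann (by positivity)).trans ?_
    refine (two_mul_sin_mul_sum_norm_le hn hu (by positivity) hstep).trans_eq ?_
    field_simp
  have hlim : Filter.Tendsto
      (fun n : ℕ => Real.pi * Real.sinc (Real.pi / n / 2) * (I - C * (n : ℝ)⁻¹)) Filter.atTop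
      (nhds (Real.pi * Real.sinc (0 / 2) * (I - C * 0))) := by
    refine Filter.Tendsto.mul (Filter.Tendsto.const_mul _ ?_)
      ((tendsto_inv_atTop_nhds_zero_nat.const_mul _).const_sub _)
    exact (Real.continuous_sinc.tendsto _).comp
      ((tendsto_const_div_atTop_nhds_zero_nat Real.pi).div_const 2)
  have := le_of_tendsto hlim (Filter.eventually_atTop.2 ⟨1, fun n hn => key n hn⟩)
  rw [le_div_iff₀' Real.pi_pos]
  simpa using this

/-- Pettis integral of a bounded weakly measurable function with values in a Hilbert space. -/
theorem exists_inner_eq_integral_inner {E α : Type*} [NormedAddCommGroup E]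
    [InnerProductSpace ℝ E] [CompleteSpace E] [MeasurableSpace α] {μ : Measure α}
    [IsFiniteMeasure μ] {k : α → E} {M : ℝ}
    (hk : ∀ v, AEStronglyMeasurable (fun y => ⟪k y, v⟫) μ) (hM : ∀ᵐ y ∂μ, ‖k y‖ ≤ M) :
    ∃ w : E, ∀ v, ⟪w, v⟫ = ∫ y, ⟪k y, v⟫ ∂μ := by
  have hbd : ∀ v, ∀ᵐ y ∂μ, ‖⟪k y, v⟫‖ ≤ M * ‖v‖ := fun v => by
    filter_upwards [hM] with y hy
    exact (norm_inner_le_norm _ _).trans (by gcongr)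
  have hint : ∀ v, Integrable (fun y => ⟪k y, v⟫) μ := fun v => .of_bound (hk v) _ (hbd v)
  let L : E →ₗ[ℝ] ℝ :=
    { toFun := fun v => ∫ y, ⟪k y, v⟫ ∂μ
      map_add' := fun v w => by simp only [inner_add_right, integral_add (hint v) (hint w)]
      map_smul' := fun c v => by simp [inner_smul_right, integral_const_mul] }
  have hL : ∀ v, ‖L v‖ ≤ (M * μ.real Set.univ) * ‖v‖ := fun v =>
    (norm_integral_le_of_norm_le_const (hbd v)).trans_eq (by ring)
  exact ⟨(InnerProductSpace.toDual ℝ E).symm (L.mkContinuous _ hL), fun v =>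
    InnerProductSpace.toDual_symm_apply⟩

/-- The Pettis integrals of `k` against the sign kernel form a Lipschitz path with antipodal ends. -/
theorem exists_lipschitzOnWith_inner_eq_integral_kernel {E : Type*} [NormedAddCommGroup E]
    [InnerProductSpace ℝ E] [CompleteSpace E] {k : ℝ → E}
    (hk : ∀ v, Measurable fun y => ⟪k y, v⟫)
    (hk1 : ∀ᵐ y ∂(volume.restrict (Set.Ioo (0:ℝ) 1)), ‖k y‖ ≤ 1) :
    ∃ Φ : ℝ → E, LipschitzOnWith 2 Φ (Set.Icc 0 1) ∧ Φ 1 = -Φ 0 ∧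
      ∀ x v, ⟪Φ x, v⟫ = ∫ y in Set.Ioo (0:ℝ) 1, (if x < y then (1:ℝ) else -1) * ⟪k y, v⟫ := by
  have hsign : ∀ x : ℝ, Measurable fun y => if x < y then (1:ℝ) else -1 := fun x =>
    Measurable.ite measurableSet_Ioi measurable_const measurable_const
  have hmeas : ∀ x v, Measurable fun y => (if x < y then (1:ℝ) else -1) * ⟪k y, v⟫ := fun x v =>
    (hsign x).mul (hk v)
  have hex : ∀ x : ℝ, ∃ w : E, ∀ v, ⟪w, v⟫ =
      ∫ y in Set.Ioo (0:ℝ) 1, (if x < y then (1:ℝ) else -1) * ⟪k y, v⟫ := fun x => by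
    obtain ⟨w, hw⟩ := exists_inner_eq_integral_inner (μ := volume.restrict (Set.Ioo (0:ℝ) 1))
      (k := fun y => (if x < y then (1:ℝ) else -1) • k y) (M := 1)
      (fun v => by
        simp only [real_inner_smul_left]
        exact (hmeas x v).aestronglyMeasurable)
      (by
        filter_upwards [hk1] with y hy
        split_ifs <;> simpa using hy)
    exact ⟨w, fun v => by simpa only [real_inner_smul_left] using hw v⟩
  choose Φ hΦ using hex
  have hint : ∀ x v, IntegrableOn (fun y => (if x < y then (1:ℝ) else -1) * ⟪k y, v⟫)
      (Set.Ioo 0 1) := fun x v => by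
    refine Integrable.of_bound (hmeas x v).aestronglyMeasurable ‖v‖ ?_
    filter_upwards [hk1] with y hy
    have := (norm_inner_le_norm (𝕜 := ℝ) (k y) v).trans
      (mul_le_mul_of_nonneg_right hy (norm_nonneg v))
    split_ifs <;> simpa using this
  have hmono : ∀ x x', x ≤ x' → ‖Φ x - Φ x'‖ ≤ 2 * (x' - x) := by
    intro x x' hxx
    set v := Φ x - Φ x' with hv
    have hle : ⟪v, v⟫ ≤ 2 * (x' - x) * ‖v‖ := by
      nth_rw 1 [hv]
      rw [inner_sub_left, hΦ, hΦ, ← integral_sub (hint x v) (hint x' v)]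
      calc _ ≤ ∫ y in Set.Ioo (0:ℝ) 1, (Set.Ioc x x').indicator (fun _ => 2 * ‖v‖) y := by
            refine integral_mono_ae ((hint x v).sub (hint x' v))
              ((integrable_const _).indicator measurableSet_Ioc) ?_
            filter_upwards [hk1] with y hy
            have := (real_inner_le_norm (k y) v).trans
              (mul_le_mul_of_nonneg_right hy (norm_nonneg v))
            by_cases h1 : x < y <;> by_cases h2 : y ≤ x'
            · simp [h1, h2, h2.not_gt]
              linarith
            · simp [h1, h2, not_le.1 h2]
            · simp [h1, h2.not_gt]
            · exact absurd ((not_lt.1 h1).trans hxx) h2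
        _ = (volume.restrict (Set.Ioo (0:ℝ) 1)).real (Set.Ioc x x') * (2 * ‖v‖) := by
            rw [integral_indicator measurableSet_Ioc, integral_const, smul_eq_mul,
              measureReal_restrict_apply_univ]
        _ ≤ (x' - x) * (2 * ‖v‖) := by
            gcongr
            rw [measureReal_restrict_apply measurableSet_Ioc,
              ← Real.volume_real_Ioc_of_le hxx]
            exact measureReal_mono Set.inter_subset_left measure_Ioc_lt_top.ne
        _ = _ := by ring
    rw [real_inner_self_eq_norm_mul_norm] at hle
    rcases (norm_nonneg v).eq_or_lt with h0 | h0
    · rw [← h0]; linarith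
    · exact le_of_mul_le_mul_right hle h0
  refine ⟨Φ, LipschitzOnWith.of_dist_le_mul fun x _ x' _ => ?_, ?_, hΦ⟩
  · rw [dist_eq_norm, Real.dist_eq, NNReal.coe_ofNat]
    rcases le_total x x' with h | h
    · rw [abs_sub_comm, abs_of_nonneg (sub_nonneg.2 h)]
      exact hmono x x' h
    · rw [norm_sub_rev, abs_of_nonneg (sub_nonneg.2 h)]
      exact hmono x' x h
  · refine ext_inner_right ℝ fun v => ?_
    rw [inner_neg_left, hΦ, hΦ, ← integral_neg]
    refine setIntegral_congr_fun measurableSet_Ioo fun y hy => ?_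
    simp [hy.1, hy.2.not_gt]

/-- Let `f : (0,1)×(0,1) → ℝ` be `1` if `x < y` and `-1` otherwise, and let `H` be a real
inner product space. For all measurable `g, h : (0,1) → H` of unit norm a.e.,
`∫∫ f(x,y) ⟨g(x), h(y)⟩ ≤ 2/π`. -/
theorem bell_example1_hilbert_bound (H : Type*) [NormedAddCommGroup H]
    [InnerProductSpace ℝ H] [MeasurableSpace H] [BorelSpace H]
    (g h : ℝ → H) (hgm : Measurable g) (hhm : Measurable h)
    (hg1 : ∀ᵐ x ∂(volume.restrict (Set.Ioo (0:ℝ) 1)), ‖g x‖ = 1)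
    (hh1 : ∀ᵐ y ∂(volume.restrict (Set.Ioo (0:ℝ) 1)), ‖h y‖ = 1) :
    (∫ x in Set.Ioo (0:ℝ) 1, ∫ y in Set.Ioo (0:ℝ) 1,
        (if x < y then (1:ℝ) else -1) * ⟪g x, h y⟫) ≤ 2 / Real.pi := by
  obtain ⟨Φ, hlip, hneg, hΦ⟩ := exists_lipschitzOnWith_inner_eq_integral_kernel
    (k := fun y => (h y : UniformSpace.Completion H))
    (fun v => ((UniformSpace.Completion.continuous_coe H).inner continuous_const).measurable.comp
      hhm)
    (by filter_upwards [hh1] with y hy using by simp [hy])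
  have heq : ∀ x, ∫ y in Set.Ioo (0:ℝ) 1, (if x < y then (1:ℝ) else -1) * ⟪g x, h y⟫ =
      ⟪Φ x, (g x : UniformSpace.Completion H)⟫ := fun x => by
    simp only [hΦ, UniformSpace.Completion.inner_coe, real_inner_comm]
  have hbound := integral_norm_le_of_lipschitzOnWith_of_eq_neg hlip hneg
  rw [intervalIntegral.integral_of_le zero_le_one, integral_Ioc_eq_integral_Ioo] at hbound
  refine le_trans ?_ hbound
  simp only [heq]
  by_cases hF : Integrable (fun x => ⟪Φ x, (g x : UniformSpace.Completion H)⟫)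
      (volume.restrict (Set.Ioo (0:ℝ) 1))
  · refine integral_mono_ae hF
      ((hlip.continuousOn.norm.integrableOn_Icc).mono_set Set.Ioo_subset_Icc_self) ?_
    filter_upwards [hg1] with x hx
    simpa [hx] using real_inner_le_norm (Φ x) (g x : UniformSpace.Completion H)
  · rw [integral_undef hF]
    exact integral_nonneg fun x => norm_nonneg _
end

section
/- Define g, h : (0,1) → ℝ² by g(x) = (cos πx, sin πx) and h(y) = (sin πy, −cos πy). Then ‖g(x)‖ = ‖h(y)‖ = 1 for all x, y, and ∫₀¹∫₀¹ f(x,y) ⟨g(x), h(y)⟩ dx dy = 2/π, where ⟨·,·⟩ is the Euclidean inner product on ℝ². -/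
open MeasureTheory Real
open scoped RealInnerProductSpace

/-- For `x ∈ [0, 1]`, the kernel `sign (y - x) * sin (π (y - x))` integrates to `2 / π` in `y`. -/
theorem integral_sign_mul_sin_pi_sub {x : ℝ} (hx0 : 0 ≤ x) (hx1 : x ≤ 1) :
    ∫ y in (0 : ℝ)..1, (if x < y then (1 : ℝ) else -1) * sin (π * (y - x)) = 2 / π := by
  have hπ : π ≠ 0 := pi_ne_zero
  have hderiv : ∀ y : ℝ, HasDerivAt (fun y => -cos (π * (y - x)) / π) (sin (π * (y - x))) y := by
    intro y
    have hlin : HasDerivAt (fun y : ℝ => π * (y - x)) π y := by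
      simpa using ((hasDerivAt_id y).sub_const x).const_mul π
    refine (hlin.cos.neg.div_const π).congr_deriv ?_
    field_simp
  have hint : ∀ a b : ℝ, IntervalIntegrable (fun y => sin (π * (y - x))) volume a b := fun a b =>
    Continuous.intervalIntegrable (by fun_prop) a b
  have hval : ∀ a b : ℝ, ∫ y in a..b, sin (π * (y - x)) =
      -cos (π * (b - x)) / π - -cos (π * (a - x)) / π := fun a b =>
    intervalIntegral.integral_eq_sub_of_hasDerivAt (fun y _ => hderiv y) (hint a b)
  have hleft : Set.EqOn (fun y => -sin (π * (y - x)))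
      (fun y => (if x < y then (1 : ℝ) else -1) * sin (π * (y - x))) (Set.uIoc 0 x) := by
    intro y hy
    rw [Set.uIoc_of_le hx0] at hy
    simp [not_lt.2 hy.2]
  have hright : Set.EqOn (fun y => sin (π * (y - x)))
      (fun y => (if x < y then (1 : ℝ) else -1) * sin (π * (y - x))) (Set.uIoc x 1) := by
    intro y hy
    rw [Set.uIoc_of_le hx1] at hy
    simp [hy.1]
  rw [← intervalIntegral.integral_add_adjacent_intervals
      ((hint 0 x).neg.congr hleft) ((hint x 1).congr hright),
    ← intervalIntegral.integral_congr_ae (.of_forall hleft),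
    ← intervalIntegral.integral_congr_ae (.of_forall hright),
    intervalIntegral.integral_neg, hval, hval]
  have hcos : cos (π * (1 - x)) = -cos (π * x) := by
    rw [mul_sub, mul_one, cos_pi_sub]
  have hcos_neg : cos (π * (0 - x)) = cos (π * x) := by
    rw [zero_sub, mul_neg, cos_neg]
  rw [hcos, hcos_neg, sub_self, mul_zero, cos_zero]
  ring

/-- Let `f : (0,1)×(0,1) → ℝ` be `1` if `x < y` and `-1` otherwise. With
`g(x) = (cos πx, sin πx)` and `h(y) = (sin πy, -cos πy)` in `ℝ²`, both are unit vectors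
and `∫∫ f(x,y) ⟨g(x), h(y)⟩ = 2/π`. -/
theorem bell_example1_dim2_attained
    (g h : ℝ → EuclideanSpace ℝ (Fin 2))
    (hg : ∀ x : ℝ, g x = (WithLp.equiv 2 (Fin 2 → ℝ)).symm ![Real.cos (π * x), Real.sin (π * x)])
    (hh : ∀ y : ℝ, h y = (WithLp.equiv 2 (Fin 2 → ℝ)).symm ![Real.sin (π * y), -Real.cos (π * y)]) :
    (∀ x, ‖g x‖ = 1) ∧ (∀ y, ‖h y‖ = 1) ∧
    (∫ x in Set.Ioo (0:ℝ) 1, ∫ y in Set.Ioo (0:ℝ) 1,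
        (if x < y then (1:ℝ) else -1) * ⟪g x, h y⟫) = 2 / π := by
  have hinner : ∀ x y, ⟪g x, h y⟫ = sin (π * (y - x)) := by
    intro x y
    rw [hg, hh, mul_sub, sin_sub]
    simp [PiLp.inner_apply, Fin.sum_univ_two]
    ring
  refine ⟨fun x => ?_, fun y => ?_, ?_⟩
  · simp [hg, EuclideanSpace.norm_eq, Fin.sum_univ_two]
  · simp [hh, EuclideanSpace.norm_eq, Fin.sum_univ_two]
  · have hslice : ∀ x ∈ Set.Ioo (0 : ℝ) 1, ∫ y in Set.Ioo (0 : ℝ) 1,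
        (if x < y then (1 : ℝ) else -1) * ⟪g x, h y⟫ = 2 / π := by
      intro x hx
      simp only [hinner]
      rw [← integral_Ioc_eq_integral_Ioo, ← intervalIntegral.integral_of_le zero_le_one]
      exact integral_sign_mul_sin_pi_sub hx.1.le hx.2.le
    rw [setIntegral_congr_fun measurableSet_Ioo hslice]
    simp
end

section
/- Let H be a real inner product space and let h : (0,1) → H be a measurable function with ‖h(y)‖ = 1 for almost every y. Define G : [0,1] → H by G(x) = ∫₀¹ f(x,y) h(y) dy. Then: (i) G is Lipschitz with Lipschitz constant 2; (ii) for almost every x ∈ (0,1), G is differentiable at x with G'(x) = −2 h(x); (iii) G(0) + G(1) = 0. -/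
open MeasureTheory

open Set in
/-- A continuous map `f` on a separable metric space with uncountable image of a closed set
admits two small closed pieces of that set with uncountable, disjoint images. -/
theorem IsClosed.exists_small_disjoint_images {X Y : Type*} [MetricSpace X]
    [SecondCountableTopology X] [TopologicalSpace Y] [T2Space Y] {f : X → Y} (hf : Continuous f)
    {C : Set X} (hC : IsClosed C) (hunc : ¬ (f '' C).Countable) {ε : ENNReal} (hε : 0 < ε) :
    ∃ C₀ C₁ : Set X,
      (IsClosed C₀ ∧ ¬ (f '' C₀).Countable ∧ C₀ ⊆ C ∧ Metric.ediam C₀ ≤ ε) ∧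
      (IsClosed C₁ ∧ ¬ (f '' C₁).Countable ∧ C₁ ⊆ C ∧ Metric.ediam C₁ ≤ ε) ∧
      Disjoint (f '' C₀) (f '' C₁) := by
  let S : Set (Set X) := {U | IsOpen U ∧ (f '' (C ∩ U)).Countable}
  obtain ⟨T, hTc, hTS, hTU⟩ := TopologicalSpace.isOpen_sUnion_countable S fun s hs => hs.1
  have hsmall : (f '' (C ∩ ⋃₀ S)).Countable := by
    rw [← hTU, sUnion_eq_biUnion, inter_iUnion₂, image_iUnion₂]
    exact hTc.biUnion fun U hU => (hTS hU).2
  have hbig : ¬ (f '' (C \ ⋃₀ S)).Countable := by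
    intro h
    apply hunc
    rw [← inter_union_sdiff C (⋃₀ S), image_union]
    exact hsmall.union h
  have hnt : (f '' (C \ ⋃₀ S)).Nontrivial := by
    by_contra h
    exact hbig (not_nontrivial_iff.1 h).countable
  obtain ⟨_, ⟨x₀, hx₀, rfl⟩, _, ⟨x₁, hx₁, rfl⟩, hne⟩ := hnt
  obtain ⟨V₀, V₁, hV₀, hV₁, hxV₀, hxV₁, hV⟩ := t2_separation hne
  have key : ∀ x ∈ C \ ⋃₀ S, ∀ V : Set Y, IsOpen V → f x ∈ V → ∃ D : Set X,
      (IsClosed D ∧ ¬ (f '' D).Countable ∧ D ⊆ C ∧ Metric.ediam D ≤ ε) ∧ f '' D ⊆ V := by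
    intro x hx V hVo hxV
    obtain ⟨r, hr, hrV⟩ := Metric.nhds_basis_closedEBall.mem_iff.1
      ((hVo.preimage hf).mem_nhds hxV)
    have hδ : 0 < min r (ε / 2) := lt_min hr (ENNReal.half_pos hε.ne')
    refine ⟨C ∩ Metric.closedEBall x (min r (ε / 2)),
      ⟨hC.inter Metric.isClosed_closedEBall, fun h => ?_, inter_subset_left, ?_⟩, ?_⟩
    · refine hx.2 ⟨Metric.eball x (min r (ε / 2)), ⟨Metric.isOpen_eball, h.mono ?_⟩,
        Metric.mem_eball_self hδ⟩
      gcongr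
      exact Metric.eball_subset_closedEBall
    · calc Metric.ediam (C ∩ Metric.closedEBall x (min r (ε / 2)))
          ≤ Metric.ediam (Metric.closedEBall x (ε / 2)) := Metric.ediam_mono
            (inter_subset_right.trans (Metric.closedEBall_subset_closedEBall (min_le_right _ _)))
        _ ≤ 2 * (ε / 2) := Metric.ediam_closedEBall_le
        _ = ε := ENNReal.mul_div_cancel (by simp) (by simp)
    · rw [image_subset_iff]
      exact inter_subset_right.trans
        ((Metric.closedEBall_subset_closedEBall (min_le_left _ _)).trans hrV)
  obtain ⟨C₀, h₀, hf₀⟩ := key x₀ hx₀ V₀ hV₀ hxV₀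
  obtain ⟨C₁, h₁, hf₁⟩ := key x₁ hx₁ V₁ hV₁ hxV₁
  exact ⟨C₀, C₁, h₀, h₁, hV.mono hf₀ hf₁⟩

open Set Function Filter CantorScheme in
/-- A continuous map with uncountable range on a Polish space is injective on the image of some
injection of the Cantor space. -/
theorem Continuous.exists_nat_bool_comp_injective {X Y : Type*} [TopologicalSpace X]
    [PolishSpace X] [TopologicalSpace Y] [T2Space Y] {f : X → Y} (hf : Continuous f)
    (hunc : ¬ (range f).Countable) : ∃ e : (ℕ → Bool) → X, Injective (f ∘ e) := by
  let := TopologicalSpace.upgradeIsCompletelyMetrizable X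
  obtain ⟨u, -, upos', hu⟩ := exists_seq_strictAnti_tendsto' (zero_lt_one' ENNReal)
  have upos := fun n => (upos' n).1
  let P := Subtype fun E : Set X => IsClosed E ∧ ¬ (f '' E).Countable
  choose C0 C1 h0 h1 hdisj using
    fun {C : Set X} (hC : IsClosed C) (hc : ¬ (f '' C).Countable) {ε : ENNReal} (hε : 0 < ε) =>
    hC.exists_small_disjoint_images hf hc hε
  let DP : List Bool → P := fun l => by
    induction l with
    | nil => exact ⟨univ, isClosed_univ, by rwa [image_univ]⟩
    | cons a l ih =>
      cases a
      · use C0 ih.property.1 ih.property.2 (upos (l.length + 1))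
        exact ⟨(h0 _ _ _).1, (h0 _ _ _).2.1⟩
      use C1 ih.property.1 ih.property.2 (upos (l.length + 1))
      exact ⟨(h1 _ _ _).1, (h1 _ _ _).2.1⟩
  let D : List Bool → Set X := fun l => (DP l).val
  have hanti : ClosureAntitone D := by
    refine Antitone.closureAntitone ?_ fun l => (DP l).property.1
    intro l a
    cases a
    · exact (h0 _ _ _).2.2.1
    exact (h1 _ _ _).2.2.1
  have hdiam : VanishingDiam D := by
    intro x
    apply tendsto_of_tendsto_of_tendsto_of_le_of_le' tendsto_const_nhds hu
    · simp
    rw [eventually_atTop]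
    refine ⟨1, fun m (hm : 1 ≤ m) => ?_⟩
    rw [Nat.one_le_iff_ne_zero] at hm
    rcases Nat.exists_eq_succ_of_ne_zero hm with ⟨n, rfl⟩
    dsimp
    cases x n
    · convert! (h0 _ _ _).2.2.2
      rw [PiNat.res_length]
    convert! (h1 _ _ _).2.2.2
    rw [PiNat.res_length]
  have hdisj' : ∀ l, ∀ a b, a ≠ b → Disjoint (f '' D (a :: l)) (f '' D (b :: l)) := by
    rintro l (a | a) (b | b) hab <;> try contradiction
    · exact hdisj _ _ _
    exact (hdisj _ _ _).symm
  have hnonempty : ∀ l, (D l).Nonempty := fun l => by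
    by_contra h
    exact (DP l).property.2 (by simp [show (DP l).val = ∅ from not_nonempty_iff_eq_empty.1 h])
  have hdom : ∀ x : ℕ → Bool, x ∈ (inducedMap D).1 := fun x => by
    rw [hanti.map_of_vanishingDiam hdiam hnonempty]
    apply mem_univ
  refine ⟨fun x => (inducedMap D).2 ⟨x, hdom x⟩, fun x y hxy => ?_⟩
  apply PiNat.res_injective
  ext n : 1
  induction n with
  | zero => simp
  | succ n ih =>
    simp only [PiNat.res_succ, List.cons.injEq]
    refine ⟨?_, ih⟩
    by_contra hne
    refine disjoint_left.1 (hdisj' (PiNat.res x n) _ _ hne)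
      (mem_image_of_mem f (map_mem ⟨x, hdom x⟩ (n + 1))) ?_
    have := mem_image_of_mem f (map_mem ⟨y, hdom y⟩ (n + 1))
    rw [ih]
    simp only [comp_apply] at hxy
    rwa [hxy]

open Set Function Cardinal in
/-- A map on a standard Borel space all of whose preimages are measurable has countable range. -/
theorem Set.countable_range_of_forall_measurableSet_preimage {X Y : Type*} [MeasurableSpace X]
    [StandardBorelSpace X] {f : X → Y} (hf : ∀ s : Set Y, MeasurableSet (f ⁻¹' s)) :
    (range f).Countable := by
  by_contra hunc
  let := upgradeStandardBorel X
  let g : X → X := rangeSplitting f ∘ rangeFactorization f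
  have hfg : f ∘ g = f := by
    ext x
    simp [g, apply_rangeSplitting]
  have hgm : Measurable g := fun s _ => by
    convert hf {y | ∃ h : y ∈ range f, rangeSplitting f ⟨y, h⟩ ∈ s}
    ext x
    simp [g, rangeFactorization]
  have hg : ¬ (range g).Countable := fun h => hunc (by
    rw [← hfg, range_comp]
    exact h.image f)
  obtain ⟨t, -, hgc, hpol⟩ := hgm.exists_continuous
  obtain ⟨e, he⟩ : ∃ e : (ℕ → Bool) → X, Injective (g ∘ e) :=
    @Continuous.exists_nat_bool_comp_injective X X t hpol
      UpgradedStandardBorel.toTopologicalSpace _ g hgc hg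
  have hfe : Injective (f ∘ e) := fun x y hxy => he (by
    have : rangeFactorization f (e x) = rangeFactorization f (e y) := Subtype.ext hxy
    simp [g, this])
  let φ : Set (ℕ → Bool) → {s : Set X | MeasurableSet s} :=
    fun s => ⟨f ⁻¹' ((f ∘ e) '' s), hf _⟩
  have hφ : Injective φ := fun s s' h => by
    have h' : e ⁻¹' (f ⁻¹' ((f ∘ e) '' s)) = e ⁻¹' (f ⁻¹' ((f ∘ e) '' s')) :=
      congrArg (e ⁻¹' ·) (Subtype.ext_iff.1 h)
    rwa [← preimage_comp, ← preimage_comp, hfe.preimage_image, hfe.preimage_image] at h'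
  have hle : #{s : Set X | MeasurableSet s} ≤ 𝔠 := by
    have := MeasurableSpace.cardinal_measurableSet_le_continuum
      (s := MeasurableSpace.countableGeneratingSet X)
      ((MeasurableSpace.countable_countableGeneratingSet (α := X)).le_aleph0.trans
        aleph0_le_continuum)
    rwa [MeasurableSpace.generateFrom_countableGeneratingSet] at this
  have h2 := (lift_mk_le_lift_mk_of_injective hφ).trans (lift_le.2 hle)
  simp at h2
  exact absurd h2 (not_le.2 (cantor _))

open Set Metric in
/-- A Borel measurable map from a standard Borel space to a metric space has separable range. -/
theorem TopologicalSpace.isSeparable_range_of_measurable {X M : Type*} [MeasurableSpace X]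
    [StandardBorelSpace X] [PseudoEMetricSpace M] [MeasurableSpace M] [OpensMeasurableSpace M]
    {h : X → M} (hm : Measurable h) : TopologicalSpace.IsSeparable (range h) := by
  suffices ∃ t, t ⊆ range h ∧ t.Countable ∧ range h ⊆ closure t by
    obtain ⟨t, -, htc, ht⟩ := this
    exact ⟨t, htc, ht⟩
  refine EMetric.subset_countable_closure_of_almost_dense_set _ fun ε hε => ?_
  obtain ⟨A, hA⟩ := zorn_subset {A : Set M | A ⊆ range h ∧ A.Pairwise fun x y => ε ≤ edist x y}
    fun c hc hchain => ⟨⋃₀ c, ⟨sUnion_subset fun s hs => (hc hs).1,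
      (pairwise_sUnion hchain.directedOn).2 fun s hs => (hc hs).2⟩,
      fun s hs => subset_sUnion_of_mem hs⟩
  have hsep := hA.prop.2
  refine ⟨A, ?_, fun y hy => ?_⟩
  · let φ : M → Set M := fun m => {a ∈ A | edist m a < ε / 2}
    have huniq : ∀ m, (φ m).Subsingleton := fun m a ha b hb => by
      by_contra hne
      refine (hsep ha.1 hb.1 hne).not_gt ?_
      calc edist a b ≤ edist m a + edist m b := edist_triangle_left _ _ _
        _ < ε / 2 + ε / 2 := ENNReal.add_lt_add ha.2 hb.2
        _ = ε := ENNReal.add_halves ε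
    have hopen : ∀ s : Set (Set M), ∅ ∉ s → IsOpen (φ ⁻¹' s) := fun s hs => by
      refine isOpen_iff_mem_nhds.2 fun m hm => ?_
      obtain ⟨a, ha⟩ : (φ m).Nonempty := by
        by_contra hemp
        rw [not_nonempty_iff_eq_empty] at hemp
        exact hs (hemp ▸ hm)
      filter_upwards [isOpen_eball.mem_nhds (mem_eball.2 ha.2)] with m' hm'
      have ha' : a ∈ φ m' := ⟨ha.1, hm'⟩
      rw [mem_preimage, (huniq m').eq_singleton_of_mem ha', ← (huniq m).eq_singleton_of_mem ha]
      exact hm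
    have hmeas : ∀ s : Set (Set M), MeasurableSet (φ ⁻¹' s) := fun s => by
      by_cases hs : ∅ ∈ s
      · rw [← compl_compl (φ ⁻¹' s), ← preimage_compl]
        exact (hopen _ (by simpa using hs)).measurableSet.compl
      · exact (hopen s hs).measurableSet
    have hcount := countable_range_of_forall_measurableSet_preimage (f := φ ∘ h)
      fun s => hm (hmeas s)
    refine (hcount.preimage singleton_injective).mono fun a ha => ?_
    obtain ⟨x, rfl⟩ := hA.prop.1 ha
    refine ⟨x, (huniq _).eq_singleton_of_mem ⟨ha, ?_⟩⟩
    rw [edist_self]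
    exact ENNReal.half_pos hε.ne'
  · by_contra hfar
    simp only [mem_iUnion, mem_closedEBall, not_exists, not_le] at hfar
    have hins : insert y A ⊆ A := hA.le_of_ge
      ⟨insert_subset hy hA.prop.1, hsep.insert fun a ha _ =>
        ⟨(hfar a ha).le, edist_comm y a ▸ (hfar a ha).le⟩⟩ (subset_insert _ _)
    exact absurd (hfar y (hins (mem_insert _ _))) (by simp)

/-- Let `f : (0,1)×(0,1) → ℝ` be `1` if `x < y` and `-1` otherwise, let `h : (0,1) → H`
be measurable of unit norm a.e., and `G(x) = ∫₀¹ f(x,y) h(y) dy`. Then `G` is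
2-Lipschitz on `[0,1]`, `G'(x) = -2 h(x)` for a.e. `x ∈ (0,1)`, and `G(0) + G(1) = 0`. -/
theorem bell_example1_G_properties (H : Type*) [NormedAddCommGroup H]
    [InnerProductSpace ℝ H] [MeasurableSpace H] [BorelSpace H] [CompleteSpace H]
    (h : ℝ → H) (hm : Measurable h)
    (h1 : ∀ᵐ y ∂(volume.restrict (Set.Ioo (0:ℝ) 1)), ‖h y‖ = 1)
    (G : ℝ → H)
    (hG : ∀ x : ℝ, G x = ∫ y in Set.Ioo (0:ℝ) 1, (if x < y then (1:ℝ) else -1) • h y) :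
    LipschitzOnWith 2 G (Set.Icc 0 1) ∧
    (∀ᵐ x ∂(volume.restrict (Set.Ioo (0:ℝ) 1)), HasDerivAt G ((-2 : ℝ) • h x) x) ∧
    G 0 + G 1 = 0 := by
  have hsm : StronglyMeasurable h :=
    stronglyMeasurable_iff_measurable_separable.2
      ⟨hm, TopologicalSpace.isSeparable_range_of_measurable hm⟩
  have hint : IntegrableOn h (Set.Ioo 0 1) :=
    Measure.integrableOn_of_bounded (M := 1) (by simp) hsm.aestronglyMeasurable
      (h1.mono fun y hy => hy.le)
  set k : ℝ → H := (Set.Ioo (0 : ℝ) 1).indicator h with hk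
  have hki : Integrable k := hint.integrable_indicator measurableSet_Ioo
  have hkn : ∀ᵐ y, ‖k y‖ ≤ 1 := by
    filter_upwards [(ae_restrict_iff' measurableSet_Ioo).1 h1] with y hy
    by_cases hy' : y ∈ Set.Ioo (0 : ℝ) 1
    · simp [hk, hy', hy hy']
    · simp [hk, hy']
  have hGk : ∀ x, G x = (∫ y, k y) - (2 : ℝ) • ∫ y in Set.Iic x, k y := by
    intro x
    rw [hG, ← integral_indicator measurableSet_Ioo, ← integral_indicator measurableSet_Iic,
      ← integral_smul]
    refine Eq.trans ?_ (integral_sub hki ((hki.indicator measurableSet_Iic).smul (2 : ℝ)))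
    congr 1
    ext y
    rcases lt_or_ge x y with hxy | hxy
    · simp [hk, Set.indicator, hxy, hxy.not_ge]
    · by_cases hy : y ∈ Set.Ioo (0 : ℝ) 1 <;> simp [hk, hy, hxy, hxy.not_gt, two_smul]
  have hdiff : ∀ x y, G y = G x - (2 : ℝ) • ∫ t in x..y, k t := by
    intro x y
    rw [hGk, hGk, ← intervalIntegral.integral_Iic_sub_Iic hki.integrableOn hki.integrableOn,
      smul_sub]
    abel
  refine ⟨?_, ?_, ?_⟩
  · refine LipschitzOnWith.of_dist_le_mul fun x _ y _ => ?_
    rw [dist_eq_norm, hdiff y x, sub_sub_cancel_left, norm_neg, norm_smul]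
    have := intervalIntegral.norm_integral_le_of_norm_le_const_ae (a := y) (b := x) (C := 1)
      (hkn.mono fun t ht _ => ht)
    rw [Real.dist_eq]
    simpa using this
  · rw [ae_restrict_iff' measurableSet_Ioo]
    filter_upwards [LocallyIntegrable.ae_hasDerivAt_integral hki.locallyIntegrable] with x hx hx01
    have hd := ((hx 0).const_smul (2 : ℝ)).const_sub (G 0)
    rw [hk, Set.indicator_of_mem hx01, ← neg_smul] at hd
    exact hd.congr_of_eventuallyEq (Filter.Eventually.of_forall fun y => hdiff 0 y)
  · have h0 : ∫ y in Set.Iic 0, k y = 0 := setIntegral_eq_zero_of_forall_eq_zero fun y hy =>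
      Set.indicator_of_notMem (fun hy' => hy'.1.not_ge hy) _
    have h1' : ∫ y in Set.Iic 1, k y = ∫ y, k y :=
      setIntegral_eq_integral_of_forall_compl_eq_zero fun y hy =>
        Set.indicator_of_notMem (fun hy' => hy hy'.2.le) _
    rw [hGk, hGk, h0, h1', smul_zero, two_smul]
    abel
end
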